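/- There exists an absolute constant C > 0 such that for every C₀ ≥ 1 there exists ε₀ > 0 with the following property: for every R ≥ 1, if ε := ‖⟨x⟩^{1+N/2} f‖_{H^{N+2}} + ‖⟨x⟩^{1+N/2} g‖_{H^{N+1}} ≤ ε₀ and sup_{t ≥ 1} t^{1/2} sup_{x ∈ S_t^R} |u(t,x)| ≤ 2 C₀ ε, then for all t ≥ 1: ‖ ⟨·⟩^{-2} χ_{S_t^R} u₁(t,·) ‖_{L²(ℝ)} ≤ C (2 C₀ ε)³ t^{-1/2} and ‖ ⟨·⟩^{-2} χ_{S_t^R} ∂_x u₁(t,·) ‖_{L²(ℝ)} ≤ C (2 C₀ ε)³ t^{-3/2}. -/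

import Mathlib

open MeasureTheory

/-- Japanese bracket `⟨x⟩ = (1+x²)^{1/2}`. -/
noncomputable def jap (x : ℝ) : ℝ := Real.sqrt (1 + x ^ 2)

/-- Sobolev norm `‖h‖_{H^k} = (Σ_{j≤k} ‖h^{(j)}‖_{L²}²)^{1/2}`. -/
noncomputable def HNorm (h : ℝ → ℝ) (k : ℕ) : ℝ :=
  Real.sqrt (∑ j ∈ Finset.range (k + 1), ∫ x : ℝ, (iteratedDeriv j h x) ^ 2)

/-- Partial derivative in the first (time) variable. -/
noncomputable def pt (u : ℝ → ℝ → ℝ) (t x : ℝ) : ℝ := deriv (fun s => u s x) t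

/-- Partial derivative in the second (space) variable. -/
noncomputable def px (u : ℝ → ℝ → ℝ) (t x : ℝ) : ℝ := deriv (fun y => u t y) x

/-- The weighted Sobolev norm of the initial data:
`ε = ‖⟨x⟩^{1+N/2} f‖_{H^{N+2}} + ‖⟨x⟩^{1+N/2} g‖_{H^{N+1}}`. -/
noncomputable def epsN (N : ℕ) (f g : ℝ → ℝ) : ℝ :=
  HNorm (fun x => jap x ^ (1 + (N : ℝ) / 2) * f x) (N + 2)
    + HNorm (fun x => jap x ^ (1 + (N : ℝ) / 2) * g x) (N + 1)

/-- Fourier transform with the convention `ĥ(ξ) = (2π)^{-1/2} ∫ e^{-ixξ} h(x) dx`. -/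
noncomputable def FT (h : ℝ → ℂ) (ξ : ℝ) : ℂ :=
  (Real.sqrt (2 * Real.pi) : ℂ)⁻¹ * ∫ x : ℝ, Complex.exp (-(Complex.I * x * ξ)) * h x

/-- Inverse Fourier transform `(2π)^{-1/2} ∫ e^{+ixξ} h(ξ) dξ`. -/
noncomputable def IFT (h : ℝ → ℂ) (x : ℝ) : ℂ :=
  (Real.sqrt (2 * Real.pi) : ℂ)⁻¹ * ∫ ξ : ℝ, Complex.exp (Complex.I * x * ξ) * h ξ

/-- The Klein–Gordon half-wave `⟨∇⟩^{-1} sin(τ⟨∇⟩) h`, realized as the Fourier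
multiplier with symbol `⟨ξ⟩^{-1} sin(τ⟨ξ⟩)`. -/
noncomputable def KGprop (τ : ℝ) (h : ℝ → ℝ) (x : ℝ) : ℝ :=
  (IFT (fun ξ => ((Real.sin (τ * jap ξ) / jap ξ : ℝ) : ℂ) * FT (fun z => ((h z : ℝ) : ℂ)) ξ) x).re

/-- The Duhamel component `u₁(t) = ∫₁ᵗ ⟨∇⟩^{-1} sin((t−s)⟨∇⟩)[β(·) u(s,·)³] ds`. -/
noncomputable def u1 (β : ℝ → ℝ) (u : ℝ → ℝ → ℝ) (t x : ℝ) : ℝ :=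
  ∫ s in (1 : ℝ)..t, KGprop (t - s) (fun z => β z * (u s z) ^ 3) x

/-- The Lorentz boost `Zφ = t ∂_x φ + x ∂_t φ`. -/
noncomputable def Zb (φ : ℝ → ℝ → ℝ) (t x : ℝ) : ℝ := t * px φ t x + x * pt φ t x

/-- Weighted `L²` norm `‖⟨·⟩^{-2} χ_{S_t^R} h‖_{L²}`, where `S_t^R = {x : t² − x² ≤ R²}`. -/
noncomputable def wL2 (t R : ℝ) (h : ℝ → ℝ) : ℝ :=
  Real.sqrt (∫ x in {x : ℝ | t ^ 2 - x ^ 2 ≤ R ^ 2}, (jap x ^ (-(2 : ℝ)) * h x) ^ 2)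

/-!
The multiplier `⟨∇⟩⁻¹ sin (τ⟨∇⟩)` is convolution with `½ J₀(√(τ² - z²))` on `|z| ≤ τ`. Writing
`J₀(√w)` and its derivatives as entire functions of `w`, an energy argument for Bessel's equation
gives the decay of the kernel away from the light cone, and the weights `⟨x⟩⁻²` and `⟨x - z⟩⁻⁴`
leave a factor `⟨z⟩⁻²` on the kernel, which keeps `|z|` away from `τ`. Hence, by Young's inequality,
the weighted propagator decays like `τ^(-1/2)` and its `x`-derivative like `τ^(-3/2)`.

The points `x - z` that reach `x ∈ S_t^R` from time `s` lie in `S_s^R`, where the cubic source is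
`O(s^(-3/2) ⟨y⟩⁻⁴)`. By Minkowski's inequality it remains to integrate `s^(-3/2) ⟨t - s⟩^(-a)` over
`[1, t]` for `a = 1/2` and `a = 3/2`, and either factor is as small as the claim when `s ≤ t/2` or
`s ≥ t/2`.
-/

open Filter Set Topology
open scoped ENNReal Nat FourierTransform Convolution

/-! ### The Japanese bracket -/

theorem jap_sq (x : ℝ) : jap x ^ 2 = 1 + x ^ 2 := Real.sq_sqrt (by positivity)

theorem jap_neg (x : ℝ) : jap (-x) = jap x := by rw [jap, neg_sq, jap]

theorem jap_pos (x : ℝ) : 0 < jap x := Real.sqrt_pos.2 (by positivity)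

theorem one_le_jap (x : ℝ) : 1 ≤ jap x := Real.one_le_sqrt.2 (by nlinarith [sq_nonneg x])

theorem abs_le_jap (x : ℝ) : |x| ≤ jap x := Real.abs_le_sqrt (by linarith)

theorem continuous_jap : Continuous jap := by unfold jap; fun_prop

theorem jap_rpow_neg_two (x : ℝ) : jap x ^ (-2 : ℝ) = (jap x ^ 2)⁻¹ := by
  rw [Real.rpow_neg (jap_pos x).le, Real.rpow_two]

theorem continuous_inv_jap_sq : Continuous fun x => (jap x ^ 2)⁻¹ :=
  (continuous_jap.pow 2).inv₀ fun x => (pow_pos (jap_pos x) 2).ne'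

/-- Peetre's inequality. -/
theorem jap_sq_le_mul (x z : ℝ) : jap z ^ 2 ≤ 2 * jap x ^ 2 * jap (x - z) ^ 2 := by
  simp only [jap_sq]
  nlinarith [sq_nonneg (2 * x - z), sq_nonneg (x * (x - z))]

theorem integrable_inv_jap_sq : Integrable fun x => (jap x ^ 2)⁻¹ := by
  simpa only [jap_sq] using integrable_inv_one_add_sq

theorem integral_inv_jap_sq : ∫ x, (jap x ^ 2)⁻¹ = Real.pi := by
  simpa only [jap_sq] using integral_univ_inv_one_add_sq

theorem lintegral_inv_jap_sq : ∫⁻ x, ‖(jap x ^ 2)⁻¹‖ₑ = ENNReal.ofReal Real.pi := by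
  simp only [← integral_inv_jap_sq, ofReal_integral_eq_lintegral_ofReal integrable_inv_jap_sq
    (ae_of_all _ fun x => by positivity), Real.enorm_of_nonneg (inv_nonneg.2 (sq_nonneg (jap _)))]

/-! ### Entire Bessel functions -/

/-- The entire function with `besselEntire k (x ^ 2) = (2 / x) ^ k * J_k x`, where `J_k` is the
Bessel function of the first kind. Unlike `J_k (√r)`, it is smooth across the light cone `r = 0`. -/
noncomputable def besselEntire (k : ℕ) (r : ℝ) : ℝ :=
  ∑' n : ℕ, (-1 / 4) ^ n / (n ! * (n + k)!) * r ^ n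

theorem hasDerivAt_tsum_mul_pow {c : ℕ → ℝ} (hc : ∀ r : ℝ, Summable fun n => ‖c n * r ^ n‖)
    (hc' : ∀ r : ℝ, Summable fun n => ‖(n + 1) * c (n + 1) * r ^ n‖) (r : ℝ) :
    HasDerivAt (fun r => ∑' n, c n * r ^ n) (∑' n, (n + 1) * c (n + 1) * r ^ n) r := by
  set M := |r| + 1
  have hr : r ∈ Metric.ball (0 : ℝ) M := by simp [M]
  have hsucc (y : ℝ) (n : ℕ) :
      c (n + 1) * (((n + 1 : ℕ) : ℝ) * y ^ (n + 1 - 1)) = (n + 1) * c (n + 1) * y ^ n := by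
    push_cast [Nat.add_sub_cancel]
    ring
  have hbound : Summable fun n => ‖c n * (n * M ^ (n - 1))‖ :=
    (summable_nat_add_iff 1).1 ((hc' M).congr fun n => by rw [hsucc])
  have hle : ∀ n, ∀ y ∈ Metric.ball (0 : ℝ) M,
      ‖c n * (n * y ^ (n - 1))‖ ≤ ‖c n * (n * M ^ (n - 1))‖ := fun n y hy => by
    have : |y| ≤ |M| := (by simpa using hy : |y| < M).le.trans (le_abs_self M)
    simp only [norm_mul, norm_pow, Real.norm_eq_abs]
    gcongr
  have hderiv := hasDerivAt_tsum_of_isPreconnected hbound Metric.isOpen_ball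
    (convex_ball 0 M).isPreconnected (fun n y _ => (hasDerivAt_pow n y).const_mul (c n)) hle hr
    (hc r).of_norm hr
  rwa [(hbound.of_norm_bounded fun n => hle n r hr).tsum_eq_zero_add, Nat.cast_zero, zero_mul,
    mul_zero, zero_add, tsum_congr (hsucc r)] at hderiv

theorem summable_besselEntire (k : ℕ) (r : ℝ) :
    Summable fun n : ℕ => ‖(-1 / 4) ^ n / (n ! * (n + k)!) * r ^ n‖ := by
  refine (Real.summable_pow_div_factorial |r|).of_nonneg_of_le (fun n => norm_nonneg _) fun n => ?_
  have hfact : (1 : ℝ) ≤ (n + k)! := mod_cast (n + k).factorial_pos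
  have hpow : ‖(-1 / 4 : ℝ) ^ n‖ ≤ 1 := by
    rw [norm_pow]
    exact pow_le_one₀ (norm_nonneg _) (by norm_num)
  calc ‖(-1 / 4) ^ n / (n ! * (n + k)!) * r ^ n‖
      = ‖(-1 / 4 : ℝ) ^ n‖ * |r| ^ n / (n ! * (n + k)!) := by
        rw [norm_mul, norm_div, norm_pow r, Real.norm_eq_abs r, div_mul_eq_mul_div,
          Real.norm_of_nonneg (by positivity : (0 : ℝ) ≤ n ! * (n + k)!)]
    _ ≤ 1 * |r| ^ n / (n ! * 1) := by gcongr
    _ = |r| ^ n / n ! := by rw [one_mul, mul_one]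

theorem hasDerivAt_besselEntire (k : ℕ) (r : ℝ) :
    HasDerivAt (besselEntire k) (-(1 / 4) * besselEntire (k + 1) r) r := by
  have hcoeff (n : ℕ) (r : ℝ) :
      (n + 1) * ((-1 / 4) ^ (n + 1) / ((n + 1)! * (n + 1 + k)!)) * r ^ n
        = -(1 / 4) * ((-1 / 4) ^ n / (n ! * (n + (k + 1))!) * r ^ n) := by
    rw [show n + 1 + k = n + (k + 1) by ring, Nat.factorial_succ n]
    push_cast
    field_simp
    ring
  have := hasDerivAt_tsum_mul_pow (summable_besselEntire k) (fun r => by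
    simpa only [hcoeff, norm_mul] using (summable_besselEntire (k + 1) r).mul_left _) r
  simp only [hcoeff, tsum_mul_left] at this
  exact this

theorem continuous_besselEntire (k : ℕ) : Continuous (besselEntire k) :=
  continuous_iff_continuousAt.2 fun r => (hasDerivAt_besselEntire k r).continuousAt

theorem besselEntire_recurrence (k : ℕ) (r : ℝ) :
    besselEntire k r = (k + 1) * besselEntire (k + 1) r - r / 4 * besselEntire (k + 2) r := by
  have hcoeff (n : ℕ) :
      (-1 / 4) ^ (n + 1) / ((n + 1)! * (n + 1 + k)!) * r ^ (n + 1)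
        = (k + 1) * ((-1 / 4) ^ (n + 1) / ((n + 1)! * (n + 1 + (k + 1))!) * r ^ (n + 1))
          - r / 4 * ((-1 / 4) ^ n / (n ! * (n + (k + 2))!) * r ^ n) := by
    rw [show n + 1 + (k + 1) = n + 1 + k + 1 by ring, show n + (k + 2) = n + 1 + k + 1 by ring,
      Nat.factorial_succ (n + 1 + k), Nat.factorial_succ n]
    push_cast
    field_simp
    ring
  have hsum (j : ℕ) := (summable_besselEntire j r).of_norm
  have hsum' := (summable_nat_add_iff 1).2 (hsum (k + 1))
  rw [besselEntire, besselEntire, besselEntire, (hsum k).tsum_eq_zero_add,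
    (hsum (k + 1)).tsum_eq_zero_add, tsum_congr hcoeff,
    (hsum'.mul_left _).tsum_sub ((hsum (k + 2)).mul_left _), tsum_mul_left, tsum_mul_left,
    mul_add, ← add_sub_assoc]
  congr 2
  simp only [pow_zero, zero_add, Nat.factorial_succ k]
  push_cast
  field_simp

theorem besselEntire_apply_zero (k : ℕ) : besselEntire k 0 = 1 / k ! := by
  rw [besselEntire, tsum_eq_single 0 fun n hn => by simp [hn]]
  simp

/-- A Lyapunov function for Bessel's equation: its derivative `-J_0(ρ)² / (2 ρ²)` is nonpositive,
while it controls both `ρ J_0(ρ)²` and `ρ J_1(ρ)²`. -/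
noncomputable def besselEnergy (ρ : ℝ) : ℝ :=
  ρ * besselEntire 0 (ρ ^ 2) ^ 2 + (besselEntire 0 (ρ ^ 2) ^ 2
    + (besselEntire 0 (ρ ^ 2) - ρ ^ 2 * besselEntire 1 (ρ ^ 2)) ^ 2) / (4 * ρ)

theorem hasDerivAt_besselEnergy {ρ : ℝ} (hρ : 0 < ρ) :
    HasDerivAt besselEnergy (-(besselEntire 0 (ρ ^ 2) ^ 2 / (2 * ρ ^ 2))) ρ := by
  have hsq : HasDerivAt (fun y : ℝ => y ^ 2) (2 * ρ) ρ := by simpa using hasDerivAt_pow 2 ρ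
  have hbes (k : ℕ) : HasDerivAt (fun y => besselEntire k (y ^ 2))
      (-(1 / 4) * besselEntire (k + 1) (ρ ^ 2) * (2 * ρ)) ρ :=
    .comp (h₂ := besselEntire k) ρ (hasDerivAt_besselEntire k (ρ ^ 2)) hsq
  have hrec : besselEntire 2 (ρ ^ 2)
      = (besselEntire 1 (ρ ^ 2) - besselEntire 0 (ρ ^ 2)) * 4 / ρ ^ 2 := by
    have := besselEntire_recurrence 0 (ρ ^ 2)
    field_simp
    push_cast at this
    linarith
  refine HasDerivAt.congr_deriv (f := besselEnergy)
    (((hasDerivAt_id' ρ).mul ((hbes 0).pow 2)).add ((((hbes 0).pow 2).add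
      (((hbes 0).sub (hsq.mul (hbes 1))).pow 2)).div ((hasDerivAt_id' ρ).const_mul 4)
        (by positivity))) ?_
  simp only [Pi.pow_apply, Pi.add_apply, Pi.sub_apply, Pi.mul_apply, hrec]
  field_simp
  ring

theorem antitoneOn_besselEnergy : AntitoneOn besselEnergy (Ioi 0) := by
  refine antitoneOn_of_hasDerivWithinAt_nonpos (convex_Ioi 0)
    (fun ρ hρ => (hasDerivAt_besselEnergy hρ).continuousAt.continuousWithinAt)
    (fun ρ hρ => (hasDerivAt_besselEnergy (interior_subset hρ)).hasDerivWithinAt) fun ρ _ => ?_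
  exact neg_nonpos.2 (by positivity)

theorem mul_sq_besselEntire_zero_le {ρ : ℝ} (hρ : 1 ≤ ρ) :
    ρ ^ 1 * besselEntire 0 (ρ ^ 2) ^ 2 ≤ besselEnergy 1 := by
  refine le_trans ?_ (antitoneOn_besselEnergy (mem_Ioi.2 one_pos) (mem_Ioi.2 (by linarith)) hρ)
  rw [pow_one, besselEnergy]
  exact le_add_of_nonneg_right (by positivity)

theorem pow_three_mul_sq_besselEntire_one_le {ρ : ℝ} (hρ : 1 ≤ ρ) :
    ρ ^ 3 * besselEntire 1 (ρ ^ 2) ^ 2 ≤ 8 * besselEnergy 1 := by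
  have h0 : 0 < ρ := one_pos.trans_le hρ
  have hanti := antitoneOn_besselEnergy (mem_Ioi.2 one_pos) (mem_Ioi.2 h0) hρ
  set P := besselEntire 0 (ρ ^ 2)
  set Q := besselEntire 1 (ρ ^ 2)
  calc ρ ^ 3 * Q ^ 2 = (P - (P - ρ ^ 2 * Q)) ^ 2 / ρ := by field_simp; ring
    _ ≤ 2 * (P ^ 2 + (P - ρ ^ 2 * Q) ^ 2) / ρ := by
        gcongr
        nlinarith [sq_nonneg (P + (P - ρ ^ 2 * Q))]
    _ = 8 * ((P ^ 2 + (P - ρ ^ 2 * Q) ^ 2) / (4 * ρ)) := by field_simp; ring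
    _ ≤ 8 * besselEnergy ρ := by
        gcongr
        exact le_add_of_nonneg_left (by positivity)
    _ ≤ 8 * besselEnergy 1 := by gcongr

theorem exists_sq_le_of_forall_one_le {f : ℝ → ℝ} (hf : Continuous f) {n : ℕ} {M : ℝ}
    (hM : ∀ ρ, 1 ≤ ρ → ρ ^ n * f (ρ ^ 2) ^ 2 ≤ M) :
    ∃ C > 0, ∀ r, 0 ≤ r → f r ^ 2 ≤ C * (√(1 + r) ^ n)⁻¹ := by
  obtain ⟨K, hK⟩ := (isCompact_Icc (a := (0 : ℝ)) (b := 1)).bddAbove_image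
    (f := fun r => √(1 + r) ^ n * f r ^ 2) (by fun_prop)
  refine ⟨max 1 (max K (√2 ^ n * M)), by positivity, fun r hr => ?_⟩
  rw [← div_eq_mul_inv, le_div_iff₀' (by positivity)]
  refine le_max_of_le_right (le_max_iff.2 ?_)
  rcases le_total r 1 with hr1 | hr1
  · exact .inl (hK ⟨r, ⟨hr, hr1⟩, rfl⟩)
  · right
    calc √(1 + r) ^ n * f r ^ 2 ≤ (√2 * √r) ^ n * f r ^ 2 := by
          rw [← Real.sqrt_mul zero_le_two]
          gcongr
          linarith
      _ = √2 ^ n * (√r ^ n * f (√r ^ 2) ^ 2) := by rw [Real.sq_sqrt hr]; ring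
      _ ≤ √2 ^ n * M := by
          gcongr
          exact hM _ (Real.one_le_sqrt.2 hr1)

theorem exists_sq_besselEntire_zero_le :
    ∃ C > 0, ∀ r, 0 ≤ r → besselEntire 0 r ^ 2 ≤ C * (√(1 + r) ^ 1)⁻¹ :=
  exists_sq_le_of_forall_one_le (continuous_besselEntire 0) fun _ => mul_sq_besselEntire_zero_le

theorem exists_sq_besselEntire_one_le :
    ∃ C > 0, ∀ r, 0 ≤ r → besselEntire 1 r ^ 2 ≤ C * (√(1 + r) ^ 3)⁻¹ :=
  exists_sq_le_of_forall_one_le (continuous_besselEntire 1) fun _ =>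
    pow_three_mul_sq_besselEntire_one_le

/-! ### Differentiation under the integral sign -/

section Leibniz

variable {E : Type*} [NormedAddCommGroup E] [NormedSpace ℝ E] {F F' : ℝ → ℝ → E}

theorem hasDerivAt_intervalIntegral_param (hF : Continuous F.uncurry) (hF' : Continuous F'.uncurry)
    (h : ∀ t z, HasDerivAt (F · z) (F' t z) t) (a b t : ℝ) :
    HasDerivAt (fun t => ∫ z in a..b, F t z) (∫ z in a..b, F' t z) t := by
  obtain ⟨M, hM⟩ := ((isCompact_Icc (a := t - 1) (b := t + 1)).prod
    (isCompact_uIcc (a := a) (b := b))).exists_bound_of_continuousOn hF'.continuousOn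
  exact (intervalIntegral.hasDerivAt_integral_of_dominated_loc_of_deriv_le
    (s := Icc (t - 1) (t + 1)) (bound := fun _ => M) (Icc_mem_nhds (by linarith) (by linarith))
    (.of_forall fun y => (hF.uncurry_left y).aestronglyMeasurable)
    ((hF.uncurry_left t).intervalIntegrable _ _) (hF'.uncurry_left t).aestronglyMeasurable
    (ae_of_all _ fun z hz y hy => hM (y, z) ⟨hy, uIoc_subset_uIcc hz⟩) intervalIntegrable_const
    (ae_of_all _ fun z _ y _ => h y z)).2

theorem intervalIntegral_eq_sub_zero {f : ℝ → E} (hf : Continuous f) (a b : ℝ) :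
    ∫ z in a..b, f z = (∫ z in 0..b, f z) - ∫ z in 0..a, f z :=
  (intervalIntegral.integral_interval_sub_left (hf.intervalIntegrable _ _)
    (hf.intervalIntegrable _ _)).symm

theorem continuous_intervalIntegral {X : Type*} [TopologicalSpace X] [FirstCountableTopology X]
    {G : X → ℝ → E} (hG : Continuous G.uncurry) {a b : X → ℝ} (ha : Continuous a)
    (hb : Continuous b) : Continuous fun p => ∫ z in a p..b p, G p z := by
  simp only [fun p => intervalIntegral_eq_sub_zero (hG.uncurry_left p) (a p) (b p)]
  exact (intervalIntegral.continuous_parametric_intervalIntegral_of_continuous hG hb).sub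
    (intervalIntegral.continuous_parametric_intervalIntegral_of_continuous hG ha)

variable [CompleteSpace E]

theorem hasDerivAt_intervalIntegral_right (hF : Continuous F.uncurry)
    (hF' : Continuous F'.uncurry) (h : ∀ t z, HasDerivAt (F · z) (F' t z) t) {b : ℝ → ℝ}
    {b' t : ℝ} (hb : HasDerivAt b b' t) (c : ℝ) :
    HasDerivAt (fun t => ∫ z in c..b t, F t z) (b' • F t (b t) + ∫ z in c..b t, F' t z) t := by
  have hspan : Continuous (ContinuousLinearMap.toSpanSingleton ℝ : E → ℝ →L[ℝ] E) :=
    (ContinuousLinearMap.toSpanSingletonCLE (𝕜 := ℝ) (E := E)).continuous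
  have hstrict := hasStrictFDerivAt_uncurry_coprod (𝕜 := ℝ) (u := (t, b t))
    (f := fun t v => ∫ z in c..v, F t z)
    (f₁ := fun t v => ContinuousLinearMap.toSpanSingleton ℝ (∫ z in c..v, F' t z))
    (f₂ := fun t v => ContinuousLinearMap.toSpanSingleton ℝ (F t v))
    (.of_forall fun p => (hasDerivAt_intervalIntegral_param hF hF' h c p.2 p.1).hasFDerivAt)
    (.of_forall fun p => ((hF.uncurry_left p.1).integral_hasStrictDerivAt c p.2).hasDerivAt
      |>.hasFDerivAt)
    (hspan.comp
      (intervalIntegral.continuous_parametric_primitive_of_continuous hF')).continuousAt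
    (hspan.comp hF).continuousAt
  have := hstrict.hasFDerivAt.comp_hasDerivAt t ((hasDerivAt_id t).prodMk hb)
  refine HasDerivAt.congr_deriv this ?_
  simp [Function.HasUncurry.uncurry, add_comm]

theorem hasDerivAt_intervalIntegral (hF : Continuous F.uncurry) (hF' : Continuous F'.uncurry)
    (h : ∀ t z, HasDerivAt (F · z) (F' t z) t) {a b : ℝ → ℝ} {a' b' t : ℝ}
    (ha : HasDerivAt a a' t) (hb : HasDerivAt b b' t) :
    HasDerivAt (fun t => ∫ z in a t..b t, F t z)
      (b' • F t (b t) - a' • F t (a t) + ∫ z in a t..b t, F' t z) t := by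
  simp only [fun t => intervalIntegral_eq_sub_zero (hF.uncurry_left t) (a t) (b t),
    intervalIntegral_eq_sub_zero (hF'.uncurry_left t) (a t) (b t), sub_add_sub_comm]
  exact (hasDerivAt_intervalIntegral_right hF hF' h hb 0).sub
    (hasDerivAt_intervalIntegral_right hF hF' h ha 0)

end Leibniz

/-! ### The fundamental solution of the Klein–Gordon equation -/

theorem hasDerivAt_besselEntire_sq_sub (k : ℕ) (τ z : ℝ) :
    HasDerivAt (fun τ => besselEntire k (τ ^ 2 - z ^ 2))
      (-(τ / 2) * besselEntire (k + 1) (τ ^ 2 - z ^ 2)) τ :=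
  (HasDerivAt.comp (h₂ := besselEntire k) τ (hasDerivAt_besselEntire k _)
    ((hasDerivAt_pow 2 τ).sub_const (z ^ 2))).congr_deriv (by push_cast; ring)

theorem hasDerivAt_besselEntire_sub_sq (k : ℕ) (τ z : ℝ) :
    HasDerivAt (fun z => besselEntire k (τ ^ 2 - z ^ 2))
      (z / 2 * besselEntire (k + 1) (τ ^ 2 - z ^ 2)) z :=
  (HasDerivAt.comp (h₂ := besselEntire k) z (hasDerivAt_besselEntire k _)
    ((hasDerivAt_pow 2 z).const_sub (τ ^ 2))).congr_deriv (by push_cast; ring)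

theorem eq_sin_smul_of_hasDerivAt {E : Type*} [NormedAddCommGroup E] [NormedSpace ℝ E]
    {y y' : ℝ → E} {ω : ℝ} {c : E} (hy : ∀ t, HasDerivAt y (y' t) t)
    (hy' : ∀ t, HasDerivAt y' (-ω ^ 2 • y t) t) (h0 : y 0 = 0) (h0' : y' 0 = c) (t : ℝ) :
    ω • y t = Real.sin (t * ω) • c := by
  have hmul (t : ℝ) : HasDerivAt (fun t => t * ω) ω t := hasDerivAt_mul_const ω
  have hcos : Real.cos (t * ω) • y' t + (ω * Real.sin (t * ω)) • y t = c := by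
    have hconst (t : ℝ) : HasDerivAt
        (fun t => Real.cos (t * ω) • y' t + (ω * Real.sin (t * ω)) • y t) 0 t := by
      refine (((hmul t).cos.smul (hy' t)).add (((hmul t).sin.const_mul ω).smul (hy t))).congr_deriv
        ?_
      module
    have := is_const_of_deriv_eq_zero (fun t => (hconst t).differentiableAt)
      (fun t => (hconst t).deriv) t 0
    simpa [h0'] using this
  have hsin : (ω * Real.cos (t * ω)) • y t - Real.sin (t * ω) • y' t = 0 := by
    have hconst (t : ℝ) : HasDerivAt
        (fun t => (ω * Real.cos (t * ω)) • y t - Real.sin (t * ω) • y' t) 0 t := by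
      refine ((((hmul t).cos.const_mul ω).smul (hy t)).sub ((hmul t).sin.smul (hy' t))).congr_deriv
        ?_
      module
    have := is_const_of_deriv_eq_zero (fun t => (hconst t).differentiableAt)
      (fun t => (hconst t).deriv) t 0
    simpa [h0] using this
  calc ω • y t = (Real.cos (t * ω) ^ 2 + Real.sin (t * ω) ^ 2) • ω • y t := by
        rw [Real.cos_sq_add_sin_sq, one_smul]
    _ = Real.cos (t * ω) • ((ω * Real.cos (t * ω)) • y t - Real.sin (t * ω) • y' t)
        + Real.sin (t * ω) • (Real.cos (t * ω) • y' t + (ω * Real.sin (t * ω)) • y t) := by module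
    _ = Real.sin (t * ω) • c := by rw [hsin, hcos, smul_zero, zero_add]

section WaveEquation

variable {E : Type*} [NormedAddCommGroup E] [NormedSpace ℝ E] [CompleteSpace E]
  {e e' e'' : ℝ → E}

theorem integral_besselEntire_smul_deriv_deriv (he : ∀ z, HasDerivAt e (e' z) z)
    (he' : ∀ z, HasDerivAt e' (e'' z) z) (hcont : Continuous e'') (τ : ℝ) :
    ∫ z in -τ..τ, besselEntire 0 (τ ^ 2 - z ^ 2) • e'' z
      = e' τ - e' (-τ) - (τ / 2) • (e τ + e (-τ)) + ∫ z in -τ..τ,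
        (1 / 2 * besselEntire 1 (τ ^ 2 - z ^ 2) + z ^ 2 / 4 * besselEntire 2 (τ ^ 2 - z ^ 2)) •
          e z := by
  have cbes (k : ℕ) : Continuous fun z => besselEntire k (τ ^ 2 - z ^ 2) :=
    (continuous_besselEntire k).comp (by fun_prop)
  have ce' : Continuous e' := continuous_iff_continuousAt.2 fun z => (he' z).continuousAt
  have hK (z : ℝ) := hasDerivAt_besselEntire_sub_sq 0 τ z
  have hK' (z : ℝ) : HasDerivAt (fun z => z / 2 * besselEntire 1 (τ ^ 2 - z ^ 2))
      (1 / 2 * besselEntire 1 (τ ^ 2 - z ^ 2) + z ^ 2 / 4 * besselEntire 2 (τ ^ 2 - z ^ 2)) z :=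
    (((hasDerivAt_id' z).div_const 2).mul (hasDerivAt_besselEntire_sub_sq 1 τ z)).congr_deriv
      (by ring)
  rw [intervalIntegral.integral_smul_deriv_eq_deriv_smul (fun z _ => hK z) (fun z _ => he' z)
      ((by fun_prop : Continuous fun z => _).intervalIntegrable _ _)
      (hcont.intervalIntegrable _ _),
    intervalIntegral.integral_smul_deriv_eq_deriv_smul (fun z _ => hK' z) (fun z _ => he z)
      ((by fun_prop : Continuous fun z => _).intervalIntegrable _ _)
      (ce'.intervalIntegrable _ _)]
  simp only [neg_sq, sub_self, besselEntire_apply_zero, Nat.factorial]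
  module

theorem hasDerivAt_integral_besselEntire_smul (he : Continuous e) (τ : ℝ) :
    HasDerivAt (fun τ => ∫ z in -τ..τ, besselEntire 0 (τ ^ 2 - z ^ 2) • e z)
      (e τ + e (-τ) - ∫ z in -τ..τ, (τ / 2 * besselEntire 1 (τ ^ 2 - z ^ 2)) • e z) τ := by
  have cbes (k : ℕ) : Continuous fun p : ℝ × ℝ => besselEntire k (p.1 ^ 2 - p.2 ^ 2) :=
    (continuous_besselEntire k).comp (by fun_prop)
  have ce : Continuous fun p : ℝ × ℝ => e p.2 := he.comp continuous_snd
  refine (hasDerivAt_intervalIntegral (F := fun τ z => besselEntire 0 (τ ^ 2 - z ^ 2) • e z)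
    (F' := fun τ z => (-(τ / 2) * besselEntire 1 (τ ^ 2 - z ^ 2)) • e z)
    ((cbes 0).smul ce) ((by fun_prop : Continuous fun p : ℝ × ℝ => _).smul ce)
    (fun τ z => (hasDerivAt_besselEntire_sq_sub 0 τ z).smul_const (e z))
    (hasDerivAt_neg τ) (hasDerivAt_id τ)).congr_deriv ?_
  simp only [id_eq, neg_sq, sub_self, besselEntire_apply_zero, Nat.factorial, neg_mul, neg_smul,
    intervalIntegral.integral_neg]
  module

theorem hasDerivAt_integral_mul_besselEntire_one_smul (he : Continuous e) (τ : ℝ) :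
    HasDerivAt (fun τ => ∫ z in -τ..τ, (τ / 2 * besselEntire 1 (τ ^ 2 - z ^ 2)) • e z)
      ((τ / 2) • (e τ + e (-τ)) + ∫ z in -τ..τ,
        (1 / 2 * besselEntire 1 (τ ^ 2 - z ^ 2) - τ ^ 2 / 4 * besselEntire 2 (τ ^ 2 - z ^ 2)) •
          e z) τ := by
  have cbes (k : ℕ) : Continuous fun p : ℝ × ℝ => besselEntire k (p.1 ^ 2 - p.2 ^ 2) :=
    (continuous_besselEntire k).comp (by fun_prop)
  have ce : Continuous fun p : ℝ × ℝ => e p.2 := he.comp continuous_snd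
  have hK (τ z : ℝ) : HasDerivAt (fun τ => τ / 2 * besselEntire 1 (τ ^ 2 - z ^ 2))
      (1 / 2 * besselEntire 1 (τ ^ 2 - z ^ 2) - τ ^ 2 / 4 * besselEntire 2 (τ ^ 2 - z ^ 2)) τ :=
    (((hasDerivAt_id' τ).div_const 2).mul (hasDerivAt_besselEntire_sq_sub 1 τ z)).congr_deriv
      (by ring)
  refine (hasDerivAt_intervalIntegral
    (F := fun τ z => (τ / 2 * besselEntire 1 (τ ^ 2 - z ^ 2)) • e z)
    (F' := fun τ z => (1 / 2 * besselEntire 1 (τ ^ 2 - z ^ 2)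
      - τ ^ 2 / 4 * besselEntire 2 (τ ^ 2 - z ^ 2)) • e z)
    ((by fun_prop : Continuous fun p : ℝ × ℝ => _).smul ce)
    ((by fun_prop : Continuous fun p : ℝ × ℝ => _).smul ce)
    (fun τ z => (hK τ z).smul_const (e z)) (hasDerivAt_neg τ) (hasDerivAt_id τ)).congr_deriv ?_
  simp only [id_eq, neg_sq, sub_self, besselEntire_apply_zero, Nat.factorial]
  module

theorem hasDerivAt_deriv_integral_besselEntire_smul (he : ∀ z, HasDerivAt e (e' z) z)
    (he' : ∀ z, HasDerivAt e' (e'' z) z) (hcont : Continuous e'') (τ : ℝ) :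
    HasDerivAt
      (fun τ => e τ + e (-τ) - ∫ z in -τ..τ, (τ / 2 * besselEntire 1 (τ ^ 2 - z ^ 2)) • e z)
      (∫ z in -τ..τ, besselEntire 0 (τ ^ 2 - z ^ 2) • (e'' z - e z)) τ := by
  have cbes (k : ℕ) : Continuous fun z => besselEntire k (τ ^ 2 - z ^ 2) :=
    (continuous_besselEntire k).comp (by fun_prop)
  have ce : Continuous e := continuous_iff_continuousAt.2 fun z => (he z).continuousAt
  have hwave (z : ℝ) : besselEntire 0 (τ ^ 2 - z ^ 2) • (e'' z - e z)
      = besselEntire 0 (τ ^ 2 - z ^ 2) • e'' z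
        - ((1 / 2 * besselEntire 1 (τ ^ 2 - z ^ 2) + z ^ 2 / 4 * besselEntire 2 (τ ^ 2 - z ^ 2))
            • e z
          + (1 / 2 * besselEntire 1 (τ ^ 2 - z ^ 2) - τ ^ 2 / 4 * besselEntire 2 (τ ^ 2 - z ^ 2))
            • e z) := by
    have := besselEntire_recurrence 0 (τ ^ 2 - z ^ 2)
    rw [smul_sub, ← add_smul, this]
    module
  have hneg : HasDerivAt (fun τ => e (-τ)) (-e' (-τ)) τ :=
    HasDerivAt.congr_deriv ((he (-τ)).scomp τ (hasDerivAt_neg τ)) (neg_one_smul ℝ _)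
  refine (((he τ).add hneg).sub
    (hasDerivAt_integral_mul_besselEntire_one_smul ce τ)).congr_deriv ?_
  simp only [hwave]
  rw [intervalIntegral.integral_sub, intervalIntegral.integral_add,
    integral_besselEntire_smul_deriv_deriv he he' hcont]
  · module
  all_goals exact Continuous.intervalIntegrable (by fun_prop) _ _

end WaveEquation

/-- The Fourier transform of the kernel solves `y'' = -⟨ξ⟩² y`, `y(0) = 0`, `y'(0) = 1`. -/
theorem integral_besselEntire_mul_exp (τ ξ : ℝ) :
    1 / 2 * ∫ z in -τ..τ, (besselEntire 0 (τ ^ 2 - z ^ 2) : ℂ) * Complex.exp (-(ξ * z) * Complex.I)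
      = (Real.sin (τ * jap ξ) / jap ξ : ℝ) := by
  set e : ℝ → ℂ := fun z => Complex.exp (-(ξ * z) * Complex.I)
  have he (z : ℝ) : HasDerivAt e (-(ξ * Complex.I) * e z) z := by
    have : HasDerivAt (fun z : ℝ => -(ξ * (z : ℂ)) * Complex.I) (-(ξ * Complex.I)) z := by
      simpa using (((hasDerivAt_id' z).ofReal_comp.const_mul (ξ : ℂ)).neg.mul_const Complex.I)
    exact this.cexp.congr_deriv (mul_comm _ _)
  have he' (z : ℝ) : HasDerivAt (fun z => -(ξ * Complex.I) * e z) (-ξ ^ 2 * e z) z :=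
    ((he z).const_mul _).congr_deriv (by linear_combination ξ ^ 2 * e z * Complex.I_sq)
  have ce : Continuous e := continuous_iff_continuousAt.2 fun z => (he z).continuousAt
  have hsin := eq_sin_smul_of_hasDerivAt (ω := jap ξ) (hasDerivAt_integral_besselEntire_smul ce)
    (fun t => (hasDerivAt_deriv_integral_besselEntire_smul he he' (by fun_prop) t).congr_deriv ?_)
    (by simp) rfl τ
  · have hjap : (jap ξ : ℂ) ≠ 0 := mod_cast (jap_pos ξ).ne'
    have he0 : e 0 = 1 := by simp [e]
    simp only [Complex.real_smul, neg_zero, intervalIntegral.integral_same, sub_zero, he0] at hsin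
    rw [one_div, inv_mul_eq_div, Complex.ofReal_div, div_eq_div_iff two_ne_zero hjap]
    linear_combination hsin
  · rw [← intervalIntegral.integral_smul]
    congr 1 with z
    simp only [Complex.real_smul, jap_sq]
    push_cast
    ring

/-! ### Fourier multipliers as convolutions -/

section Fourier

variable {V : Type*} [NormedAddCommGroup V] [InnerProductSpace ℝ V] [FiniteDimensional ℝ V]
  [MeasurableSpace V] [BorelSpace V]

theorem fourier_ae_eq_fourier_toLp {E : Type*} [NormedAddCommGroup E] [InnerProductSpace ℂ E]
    [CompleteSpace E] {f : V → E} (hf : Integrable f) (hf2 : MemLp f 2) :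
    𝓕 f =ᵐ[volume] (𝓕 (hf2.toLp f) : Lp E 2 (volume : Measure V)) := by
  have hcont : Continuous (𝓕 f) :=
    VectorFourier.fourierIntegral_continuous Real.continuous_fourierChar continuous_inner hf
  refine ae_eq_of_integral_contDiff_smul_eq hcont.locallyIntegrable
    ((Lp.memLp _).locallyIntegrable one_le_two) fun g g_smooth g_cpt => ?_
  have hg_cpt : HasCompactSupport (Complex.ofRealCLM ∘ g) := g_cpt.comp_left rfl
  have hg_smooth : ContDiff ℝ (⊤ : ℕ∞) (Complex.ofRealCLM ∘ g) := by fun_prop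
  set G : SchwartzMap V ℂ := hg_cpt.toSchwartzMap hg_smooth
  have hflip := VectorFourier.integral_fourierIntegral_smul_eq_flip (L := innerₗ V)
    Real.continuous_fourierChar continuous_inner (G.integrable (μ := volume)) hf
  calc ∫ x, g x • 𝓕 f x = ∫ x, G x • 𝓕 f x := by simp [G]
    _ = ∫ x, 𝓕 G x • f x := by simpa using! hflip.symm
    _ = ∫ x, 𝓕 G x • hf2.toLp f x :=
        integral_congr_ae <| hf2.coeFn_toLp.mono fun x hx => by simp only [hx]
    _ = ((𝓕 (hf2.toLp f) : Lp E 2 (volume : Measure V)) : TemperedDistribution V E) G := by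
        rw [← Lp.fourier_toTemperedDistribution_eq, TemperedDistribution.fourier_apply,
          Lp.toTemperedDistribution_apply]
    _ = ∫ x, g x • (𝓕 (hf2.toLp f) : Lp E 2 (volume : Measure V)) x := by
        rw [Lp.toTemperedDistribution_apply]
        simp [G]

theorem memLp_two_fourier {E : Type*} [NormedAddCommGroup E] [InnerProductSpace ℂ E]
    [CompleteSpace E] {f : V → E} (hf : Integrable f) (hf2 : MemLp f 2) : MemLp (𝓕 f) 2 :=
  (memLp_congr_ae (fourier_ae_eq_fourier_toLp hf hf2)).2 (Lp.memLp _)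

theorem fourierInv_fourier_mul_fourier {f g : V → ℂ} (hf : Integrable f) (hf2 : MemLp f 2)
    (hg : Integrable g) (hg2 : MemLp g 2)
    (hcont : Continuous (f ⋆[ContinuousLinearMap.mul ℂ ℂ] g)) :
    𝓕⁻ (𝓕 f * 𝓕 g) = f ⋆[ContinuousLinearMap.mul ℂ ℂ] g := by
  have hfourier : 𝓕 (f ⋆[ContinuousLinearMap.mul ℂ ℂ] g) = 𝓕 f * 𝓕 g :=
    funext (Real.fourier_mul_convolution_eq hf hg)
  have hint : Integrable (𝓕 f * 𝓕 g) :=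
    (memLp_two_fourier hf hf2).integrable_mul (memLp_two_fourier hg hg2)
  rw [← hfourier] at hint ⊢
  exact hcont.fourierInv_fourier_eq (hf.integrable_convolution _ hg) hint

end Fourier

theorem FT_two_pi_mul (h : ℝ → ℂ) (v : ℝ) :
    FT h (2 * Real.pi * v) = (√(2 * Real.pi) : ℂ)⁻¹ * 𝓕 h v := by
  rw [FT, Real.fourier_real_eq_integral_exp_smul]
  congr 2 with y
  rw [smul_eq_mul]
  congr 2
  push_cast
  ring

theorem IFT_eq_fourierInv (h : ℝ → ℂ) (x : ℝ) :
    IFT h x = √(2 * Real.pi) * 𝓕⁻ (fun v => h (2 * Real.pi * v)) x := by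
  have hpi : (0 : ℝ) < 2 * Real.pi := by positivity
  have hscale : 𝓕⁻ (fun v => h (2 * Real.pi * v)) x
      = ((2 * Real.pi)⁻¹ : ℝ) • ∫ ξ : ℝ, Complex.exp (Complex.I * x * ξ) * h ξ := by
    rw [← abs_of_pos (inv_pos.2 hpi), ← Measure.integral_comp_mul_left, Real.fourierInv_eq']
    congr 1 with v
    rw [smul_eq_mul, RCLike.inner_apply, conj_trivial]
    congr 2
    push_cast
    ring
  have hsqrt : (√(2 * Real.pi) : ℂ) * ((2 * Real.pi)⁻¹ : ℝ) = (√(2 * Real.pi) : ℂ)⁻¹ := by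
    norm_cast
    rw [← div_eq_mul_inv, Real.sqrt_div_self']
    exact one_div _
  rw [IFT, hscale, Complex.real_smul, ← mul_assoc, hsqrt]

theorem IFT_mul_FT (m h : ℝ → ℂ) (x : ℝ) :
    IFT (fun ξ => m ξ * FT h ξ) x = 𝓕⁻ (fun v => m (2 * Real.pi * v) * 𝓕 h v) x := by
  have hsqrt : (√(2 * Real.pi) : ℂ) ≠ 0 := mod_cast (Real.sqrt_pos.2 Real.two_pi_pos).ne'
  simp only [IFT_eq_fourierInv, FT_two_pi_mul, mul_left_comm (m _)]
  rw [Real.fourierInv_eq', Real.fourierInv_eq', ← integral_const_mul]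
  congr 1 with v
  rw [smul_eq_mul, smul_eq_mul, mul_left_comm _ (√(2 * Real.pi) : ℂ)⁻¹, mul_inv_cancel_left₀ hsqrt]

/-! ### The Klein–Gordon propagator in physical space -/

/-- The fundamental solution `½ J_0(√(τ² - z²))` of the Klein–Gordon operator on the line, supported
in the light cone `|z| ≤ τ`. Complex-valued, so as to be Fourier transformed. -/
noncomputable def kgKernel (τ : ℝ) : ℝ → ℂ :=
  (Ioc (-τ) τ).indicator fun z => ((1 / 2 * besselEntire 0 (τ ^ 2 - z ^ 2) : ℝ) : ℂ)

/-- The propagator `⟨∇⟩⁻¹ sin(τ⟨∇⟩) F` written as the convolution with its kernel. -/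
noncomputable def kgWave (τ : ℝ) (F : ℝ → ℝ) (x : ℝ) : ℝ :=
  1 / 2 * ∫ z in -τ..τ, besselEntire 0 (τ ^ 2 - z ^ 2) * F (x - z)

theorem integral_kgKernel_mul {τ : ℝ} (hτ : 0 ≤ τ) (g : ℝ → ℂ) :
    ∫ z, kgKernel τ z * g z = 1 / 2 * ∫ z in -τ..τ, (besselEntire 0 (τ ^ 2 - z ^ 2) : ℂ) * g z := by
  rw [← intervalIntegral.integral_const_mul, intervalIntegral.integral_of_le (neg_le_self hτ),
    ← integral_indicator measurableSet_Ioc]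
  congr 1 with z
  rw [kgKernel, ← indicator_mul_left]
  congr 1 with z
  push_cast
  ring

theorem memLp_kgKernel (τ : ℝ) (p : ℝ≥0∞) : MemLp (kgKernel τ) p := by
  have hcont : Continuous fun z : ℝ => ((1 / 2 * besselEntire 0 (τ ^ 2 - z ^ 2) : ℝ) : ℂ) := by
    have := continuous_besselEntire 0
    fun_prop
  obtain ⟨M, hM⟩ :=
    (isCompact_Icc (a := -τ) (b := τ)).exists_bound_of_continuousOn hcont.continuousOn
  rw [kgKernel, memLp_indicator_iff_restrict measurableSet_Ioc]
  refine MemLp.of_bound hcont.aestronglyMeasurable M ?_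
  filter_upwards [ae_restrict_mem measurableSet_Ioc] with z hz using hM z (Ioc_subset_Icc_self hz)

theorem fourier_kgKernel {τ : ℝ} (hτ : 0 ≤ τ) (v : ℝ) :
    𝓕 (kgKernel τ) v
      = (Real.sin (τ * jap (2 * Real.pi * v)) / jap (2 * Real.pi * v) : ℝ) := by
  rw [Real.fourier_real_eq_integral_exp_smul, ← integral_besselEntire_mul_exp]
  simp only [smul_eq_mul, mul_comm _ (kgKernel τ _), integral_kgKernel_mul hτ]
  congr 3 with z
  congr 2
  push_cast
  ring

theorem kgKernel_convolution {τ : ℝ} (hτ : 0 ≤ τ) (F : ℝ → ℝ) :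
    (kgKernel τ ⋆[ContinuousLinearMap.mul ℂ ℂ] fun x => (F x : ℂ))
      = fun x => (kgWave τ F x : ℂ) := by
  ext x
  simp only [convolution_def, ContinuousLinearMap.mul_apply', integral_kgKernel_mul hτ]
  rw [kgWave]
  push_cast [← intervalIntegral.integral_ofReal]
  rfl

theorem continuous_kgWave {X : Type*} [TopologicalSpace X] [FirstCountableTopology X]
    {τ y : X → ℝ} {F : X → ℝ → ℝ} (hτ : Continuous τ) (hF : Continuous F.uncurry)
    (hy : Continuous y) : Continuous fun p => kgWave (τ p) (F p) (y p) := by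
  have := continuous_besselEntire 0
  have hF' : Continuous fun q : X × ℝ => F q.1 (y q.1 - q.2) :=
    hF.comp (f := fun q : X × ℝ => (q.1, y q.1 - q.2)) (by fun_prop)
  refine continuous_const.mul (continuous_intervalIntegral
    (G := fun p z => besselEntire 0 (τ p ^ 2 - z ^ 2) * F p (y p - z)) ?_ hτ.neg hτ)
  exact (by fun_prop : Continuous fun q : X × ℝ => besselEntire 0 (τ q.1 ^ 2 - q.2 ^ 2)).mul hF'

theorem KGprop_eq_kgWave {τ : ℝ} (hτ : 0 ≤ τ) {F : ℝ → ℝ} (hF : Continuous F)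
    (hint : Integrable F) (hmem : MemLp F 2) (x : ℝ) : KGprop τ F x = kgWave τ F x := by
  have hconv : 𝓕⁻ (𝓕 (kgKernel τ) * 𝓕 fun x => (F x : ℂ)) = fun x => (kgWave τ F x : ℂ) := by
    rw [← kgKernel_convolution hτ]
    refine fourierInv_fourier_mul_fourier (memLp_one_iff_integrable.1 (memLp_kgKernel τ 1))
      (memLp_kgKernel τ 2) hint.ofReal hmem.ofReal ?_
    rw [kgKernel_convolution hτ]
    exact Complex.continuous_ofReal.comp
      (continuous_kgWave continuous_const (hF.comp continuous_snd) continuous_id)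
  have hmul : 𝓕 (kgKernel τ) * 𝓕 (fun x => (F x : ℂ)) = fun v =>
      ((Real.sin (τ * jap (2 * Real.pi * v)) / jap (2 * Real.pi * v) : ℝ) : ℂ)
        * 𝓕 (fun x => (F x : ℂ)) v :=
    funext fun v => congrArg (· * _) (fourier_kgKernel hτ v)
  rw [KGprop, IFT_mul_FT, ← hmul, hconv, Complex.ofReal_re]

/-- The space derivative of `kgWave τ F`. -/
noncomputable def kgWaveDeriv (τ : ℝ) (F : ℝ → ℝ) (x : ℝ) : ℝ :=
  1 / 2 * (F (x + τ) - F (x - τ)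
    + ∫ z in -τ..τ, z / 2 * besselEntire 1 (τ ^ 2 - z ^ 2) * F (x - z))

theorem hasDerivAt_kgWave {F : ℝ → ℝ} (hF : Continuous F) (τ x : ℝ) :
    HasDerivAt (kgWave τ F) (kgWaveDeriv τ F x) x := by
  have hbes (k : ℕ) := continuous_besselEntire k
  have hsubst (k : ℝ → ℝ) (x : ℝ) :
      ∫ z in -τ..τ, k z * F (x - z) = ∫ y in x - τ..x + τ, k (x - y) * F y := by
    have := intervalIntegral.integral_comp_sub_left (a := -τ) (b := τ)
      (fun y => k (x - y) * F y) x
    simpa using this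
  have hleib := hasDerivAt_intervalIntegral
    (F := fun x y => besselEntire 0 (τ ^ 2 - (x - y) ^ 2) * F y)
    (F' := fun x y => (x - y) / 2 * besselEntire 1 (τ ^ 2 - (x - y) ^ 2) * F y)
    (by fun_prop) (by fun_prop) (fun x y => (HasDerivAt.comp_sub_const x y
      (hasDerivAt_besselEntire_sub_sq 0 τ (x - y))).mul_const (F y))
    ((hasDerivAt_id x).sub_const τ) ((hasDerivAt_id x).add_const τ)
  have hwave : kgWave τ F
      = fun x => 1 / 2 * ∫ y in x - τ..x + τ, besselEntire 0 (τ ^ 2 - (x - y) ^ 2) * F y :=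
    funext fun x => congrArg (1 / 2 * ·) (hsubst (fun z => besselEntire 0 (τ ^ 2 - z ^ 2)) x)
  rw [hwave, kgWaveDeriv, hsubst fun z => z / 2 * besselEntire 1 (τ ^ 2 - z ^ 2)]
  refine (hleib.const_mul (1 / 2)).congr_deriv ?_
  simp [besselEntire_apply_zero]

theorem continuous_kgWaveDeriv {X : Type*} [TopologicalSpace X] [FirstCountableTopology X]
    {τ y : X → ℝ} {F : X → ℝ → ℝ} (hτ : Continuous τ) (hF : Continuous F.uncurry)
    (hy : Continuous y) : Continuous fun p => kgWaveDeriv (τ p) (F p) (y p) := by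
  have := continuous_besselEntire 1
  have hF' {Y : Type _} [TopologicalSpace Y] {q : Y → X} {w : Y → ℝ} (hq : Continuous q)
      (hw : Continuous w) : Continuous fun r => F (q r) (w r) := hF.comp (hq.prodMk hw)
  refine continuous_const.mul (((hF' continuous_id (hy.add hτ)).sub
    (hF' continuous_id (hy.sub hτ))).add (continuous_intervalIntegral
      (G := fun p z => z / 2 * besselEntire 1 (τ p ^ 2 - z ^ 2) * F p (y p - z)) ?_ hτ.neg hτ))
  exact (by fun_prop : Continuous fun q : X × ℝ =>
    q.2 / 2 * besselEntire 1 (τ q.1 ^ 2 - q.2 ^ 2)).mul (hF' continuous_fst (by fun_prop))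

/-! ### Integral inequalities in `L²` -/

theorem eLpNorm_two_sq {α ε : Type*} [MeasurableSpace α] [TopologicalSpace ε]
    [ContinuousENorm ε] (f : α → ε) (μ : Measure α) :
    eLpNorm f 2 μ ^ 2 = ∫⁻ x, ‖f x‖ₑ ^ 2 ∂μ := by
  simpa using eLpNorm_nnreal_pow_eq_lintegral (f := f) (μ := μ) (p := 2) two_ne_zero

theorem lintegral_mul_le_eLpNorm_two {α : Type*} [MeasurableSpace α] {μ : Measure α}
    {f g : α → ℝ≥0∞} (hf : AEMeasurable f μ) (hg : AEMeasurable g μ) :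
    ∫⁻ x, f x * g x ∂μ ≤ eLpNorm f 2 μ * eLpNorm g 2 μ := by
  simpa [eLpNorm_eq_lintegral_rpow_enorm_toReal] using!
    ENNReal.lintegral_mul_le_Lp_mul_Lq μ Real.HolderConjugate.two_two hf hg

/-- Minkowski's integral inequality. -/
theorem eLpNorm_two_lintegral_le {α β : Type*} [MeasurableSpace α] [MeasurableSpace β]
    {μ : Measure α} {ν : Measure β} [SFinite μ] [SFinite ν] {F : α → β → ℝ≥0∞}
    (hF : Measurable F.uncurry) :
    eLpNorm (fun x => ∫⁻ s, F s x ∂μ) 2 ν ≤ ∫⁻ s, eLpNorm (F s) 2 ν ∂μ := by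
  have hFs (s : α) : Measurable (F s) := hF.comp measurable_prodMk_left
  have hFx (x : β) : Measurable fun s => F s x := hF.comp measurable_prodMk_right
  have hF₂ : Measurable fun q : (α × α) × β => F q.1.1 q.2 * F q.1.2 q.2 :=
    (hF.comp (by fun_prop : Measurable fun q : (α × α) × β => (q.1.1, q.2))).mul
      (hF.comp (by fun_prop : Measurable fun q : (α × α) × β => (q.1.2, q.2)))
  refine (ENNReal.pow_le_pow_left_iff two_ne_zero).1 ?_
  calc eLpNorm (fun x => ∫⁻ s, F s x ∂μ) 2 ν ^ 2
      = ∫⁻ x, ∫⁻ s : α × α, F s.1 x * F s.2 x ∂μ.prod μ ∂ν := by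
        simp only [eLpNorm_two_sq, enorm_eq_self,
          lintegral_prod_mul (hFx _).aemeasurable (hFx _).aemeasurable, ← sq]
    _ = ∫⁻ s : α × α, ∫⁻ x, F s.1 x * F s.2 x ∂ν ∂μ.prod μ :=
        (lintegral_lintegral_swap hF₂.aemeasurable).symm
    _ ≤ ∫⁻ s : α × α, eLpNorm (F s.1) 2 ν * eLpNorm (F s.2) 2 ν ∂μ.prod μ :=
        lintegral_mono fun s =>
          lintegral_mul_le_eLpNorm_two (hFs s.1).aemeasurable (hFs s.2).aemeasurable
    _ = (∫⁻ s, eLpNorm (F s) 2 ν ∂μ) ^ 2 := by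
        have hnorm : Measurable fun s => eLpNorm (F s) 2 ν := by
          simp only [eLpNorm_eq_lintegral_rpow_enorm_toReal two_ne_zero ENNReal.ofNat_ne_top]
          exact (hF.enorm.pow_const _).lintegral_prod_right'.pow_const _
        rw [sq, lintegral_prod_mul hnorm.aemeasurable hnorm.aemeasurable]

/-- Young's convolution inequality. -/
theorem eLpNorm_two_lconvolution_le {G : Type*} [AddGroup G] [MeasurableSpace G]
    [MeasurableAdd₂ G] [MeasurableNeg G] {μ : Measure G} [SFinite μ] [μ.IsAddLeftInvariant]
    {f g : G → ℝ≥0∞} (hf : Measurable f) (hg : Measurable g) :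
    eLpNorm (f ⋆ₗ[μ] g) 2 μ ≤ (∫⁻ y, f y ∂μ) * eLpNorm g 2 μ := by
  have hshift (y : G) : eLpNorm (fun x => g (-y + x)) 2 μ = eLpNorm g 2 μ :=
    eLpNorm_comp_measurePreserving hg.aestronglyMeasurable (measurePreserving_add_left μ (-y))
  calc eLpNorm (f ⋆ₗ[μ] g) 2 μ
      ≤ ∫⁻ y, eLpNorm (fun x => f y * g (-y + x)) 2 μ ∂μ := eLpNorm_two_lintegral_le
        (F := fun y x => f y * g (-y + x)) ((hf.comp measurable_fst).mul (hg.comp (by fun_prop)))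
    _ ≤ ∫⁻ y, f y * eLpNorm g 2 μ ∂μ := by
        gcongr with y
        rw [← hshift y]
        exact eLpNorm_le_mul_eLpNorm_of_ae_le_mul'' 2
          (hg.comp (measurable_const_add (-y))).aestronglyMeasurable (ae_of_all _ fun x => le_rfl)
    _ = (∫⁻ y, f y ∂μ) * eLpNorm g 2 μ := lintegral_mul_const _ hf

/-! ### The weighted norm -/

theorem inv_jap_sq_mul_abs_le {x z M y : ℝ} (hy : |y| ≤ M * (jap (x - z) ^ 4)⁻¹) :
    (jap x ^ 2)⁻¹ * |y| ≤ 2 * M * ((jap z ^ 2)⁻¹ * (jap (x - z) ^ 2)⁻¹) := by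
  have hx := jap_pos x
  have hz := jap_pos z
  have hxz := jap_pos (x - z)
  have hM : 0 ≤ M := nonneg_of_mul_nonneg_left ((abs_nonneg y).trans hy) (by positivity)
  calc (jap x ^ 2)⁻¹ * |y| ≤ (jap x ^ 2)⁻¹ * (M * (jap (x - z) ^ 4)⁻¹) := by gcongr
    _ = M * jap z ^ 2 * (jap x ^ 2 * jap (x - z) ^ 2 * jap z ^ 2 * jap (x - z) ^ 2)⁻¹ := by
        field_simp
    _ ≤ M * (2 * jap x ^ 2 * jap (x - z) ^ 2)
          * (jap x ^ 2 * jap (x - z) ^ 2 * jap z ^ 2 * jap (x - z) ^ 2)⁻¹ := by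
        gcongr
        exact jap_sq_le_mul x z
    _ = 2 * M * ((jap z ^ 2)⁻¹ * (jap (x - z) ^ 2)⁻¹) := by field_simp

theorem eLpNorm_inv_jap_sq_mul_setIntegral_le {S I : Set ℝ} (hS : MeasurableSet S)
    (hI : MeasurableSet I) {M : ℝ} {k F : ℝ → ℝ} (hk : Measurable k)
    (hF : ∀ x ∈ S, ∀ z ∈ I, |F (x - z)| ≤ M * (jap (x - z) ^ 4)⁻¹) :
    eLpNorm (fun x => (jap x ^ 2)⁻¹ * ∫ z in I, k z * F (x - z)) 2 (volume.restrict S)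
      ≤ ENNReal.ofReal (2 * M * Real.pi)
        * eLpNorm (fun z => (jap z ^ 2)⁻¹ * k z) 2 (volume.restrict I) := by
  have hjap := continuous_inv_jap_sq.measurable
  set w : ℝ → ℝ≥0∞ := fun y => ‖(jap y ^ 2)⁻¹‖ₑ
  set g : ℝ → ℝ≥0∞ := I.indicator fun z => ‖(jap z ^ 2)⁻¹ * k z‖ₑ
  have hg : Measurable g := (hjap.mul hk).enorm.indicator hI
  have hpointwise : ∀ x ∈ S, ‖(jap x ^ 2)⁻¹ * ∫ z in I, k z * F (x - z)‖ₑ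
      ≤ ENNReal.ofReal (2 * M) * (w ⋆ₗ g) x := by
    intro x hx
    rw [lconvolution_comm, lconvolution_def, ← lintegral_const_mul _ (by fun_prop),
      ← integral_const_mul]
    refine (enorm_integral_le_lintegral_enorm _).trans ?_
    rw [← lintegral_indicator hI]
    gcongr with z
    by_cases hz : z ∈ I
    · have hle := mul_le_mul_of_nonneg_left (inv_jap_sq_mul_abs_le (hF x hx z hz))
        (abs_nonneg (k z))
      have hjap_nonneg (y : ℝ) : 0 ≤ (jap y ^ 2)⁻¹ := inv_nonneg.2 (sq_nonneg _)
      simp only [g, w, indicator_of_mem hz, Real.enorm_eq_ofReal_abs, abs_mul,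
        abs_of_nonneg (hjap_nonneg _), neg_add_eq_sub]
      rw [← ENNReal.ofReal_mul (by positivity), ← ENNReal.ofReal_mul' (by positivity)]
      exact ENNReal.ofReal_le_ofReal (by linarith)
    · simp [hz]
  calc eLpNorm (fun x => (jap x ^ 2)⁻¹ * ∫ z in I, k z * F (x - z)) 2 (volume.restrict S)
      ≤ ENNReal.ofReal (2 * M) * eLpNorm (w ⋆ₗ g) 2 (volume.restrict S) := by
        refine eLpNorm_le_mul_eLpNorm_of_ae_le_mul'' 2 (by fun_prop) ?_
        filter_upwards [ae_restrict_mem hS] with x hx using hpointwise x hx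
    _ ≤ ENNReal.ofReal (2 * M) * ((∫⁻ y, w y) * eLpNorm g 2) := by
        gcongr
        exact (eLpNorm_mono_measure _ Measure.restrict_le_self).trans
          (eLpNorm_two_lconvolution_le hjap.enorm hg)
    _ = _ := by
        rw [lintegral_inv_jap_sq,
          eLpNorm_indicator_eq_eLpNorm_restrict hI, eLpNorm_enorm,
          ← mul_assoc, ← ENNReal.ofReal_mul' Real.pi_pos.le]

theorem wL2_le_of_eLpNorm_le {t R A : ℝ} {h : ℝ → ℝ} (hA : 0 ≤ A)
    (hle : eLpNorm (fun x => (jap x ^ 2)⁻¹ * h x) 2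
      (volume.restrict {x | t ^ 2 - x ^ 2 ≤ R ^ 2}) ≤ ENNReal.ofReal A) : wL2 t R h ≤ A := by
  refine Real.sqrt_le_iff.2 ⟨hA, ?_⟩
  simp only [jap_rpow_neg_two]
  have hsq := eLpNorm_two_sq (fun x => (jap x ^ 2)⁻¹ * h x)
    (volume.restrict {x | t ^ 2 - x ^ 2 ≤ R ^ 2})
  refine (le_abs_self _).trans (ENNReal.ofReal_le_ofReal_iff (sq_nonneg A) |>.1 ?_)
  rw [← Real.enorm_eq_ofReal_abs, ENNReal.ofReal_pow hA]
  refine (enorm_integral_le_lintegral_enorm _).trans ?_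
  simp only [enorm_pow]
  rw [← hsq]
  gcongr

/-! ### Local decay of the propagator -/

theorem eLpNorm_two_restrict_Ioc_le {a b A : ℝ} {f g : ℝ → ℝ} (hab : a ≤ b) (hA : 0 ≤ A)
    (hg : IntervalIntegrable g volume a b) (hfg : ∀ z ∈ Ioc a b, f z ^ 2 ≤ g z)
    (hint : ∫ z in a..b, g z ≤ A ^ 2) :
    eLpNorm f 2 (volume.restrict (Ioc a b)) ≤ ENNReal.ofReal A := by
  refine (ENNReal.pow_le_pow_left_iff two_ne_zero).1 ?_
  have hg_nonneg : 0 ≤ᵐ[volume.restrict (Ioc a b)] g := by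
    filter_upwards [ae_restrict_mem measurableSet_Ioc] with z hz
    exact (sq_nonneg _).trans (hfg z hz)
  calc eLpNorm f 2 (volume.restrict (Ioc a b)) ^ 2
      = ∫⁻ z in Ioc a b, ENNReal.ofReal (f z ^ 2) := by
        simp only [eLpNorm_two_sq, Real.enorm_eq_ofReal_abs, ← ENNReal.ofReal_pow (abs_nonneg _),
          sq_abs]
    _ ≤ ∫⁻ z in Ioc a b, ENNReal.ofReal (g z) :=
        setLIntegral_mono' measurableSet_Ioc fun z hz => ENNReal.ofReal_le_ofReal (hfg z hz)
    _ = ENNReal.ofReal (∫ z in a..b, g z) := by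
        rw [intervalIntegral.integral_of_le hab, ofReal_integral_eq_lintegral_ofReal hg.1 hg_nonneg]
    _ ≤ ENNReal.ofReal A ^ 2 := by
        rw [← ENNReal.ofReal_pow hA]
        exact ENNReal.ofReal_le_ofReal hint

theorem intervalIntegral_inv_jap_sq_le_pi (a b : ℝ) : ∫ z in a..b, (jap z ^ 2)⁻¹ ≤ Real.pi := by
  simp only [jap_sq, integral_inv_one_add_sq]
  linarith [Real.arctan_lt_pi_div_two b, Real.neg_pi_div_two_lt_arctan a]

theorem hasDerivAt_div_sqrt_one_add_sq_sub_sq {τ z : ℝ} (hz : z ^ 2 ≤ τ ^ 2) :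
    HasDerivAt (fun z => z / (jap τ ^ 2 * √(1 + (τ ^ 2 - z ^ 2))))
      (√(1 + (τ ^ 2 - z ^ 2)) ^ 3)⁻¹ z := by
  have hpos : 0 < 1 + (τ ^ 2 - z ^ 2) := by linarith
  have hsq := Real.sq_sqrt hpos.le
  have := Real.sqrt_pos.2 hpos
  have hjap := jap_pos τ
  have hinner : HasDerivAt (fun z => 1 + (τ ^ 2 - z ^ 2)) (-(2 * z)) z := by
    simpa using ((hasDerivAt_pow 2 z).const_sub (τ ^ 2)).const_add 1
  refine ((hasDerivAt_id z).div ((hinner.sqrt hpos.ne').const_mul (jap τ ^ 2))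
    (by positivity)).congr_deriv ?_
  have hτ : jap τ ^ 2 = √(1 + (τ ^ 2 - z ^ 2)) ^ 2 + z ^ 2 := by rw [jap_sq, hsq]; ring
  simp only [id]
  field_simp
  rw [hτ]
  ring

theorem continuousOn_inv_sqrt_one_add_sq_sub_sq_pow_three {τ : ℝ} :
    ContinuousOn (fun z => (√(1 + (τ ^ 2 - z ^ 2)) ^ 3)⁻¹) {z | z ^ 2 ≤ τ ^ 2} :=
  ContinuousOn.inv₀ (by fun_prop) fun z hz =>
    (pow_pos (Real.sqrt_pos.2 (by linarith [show z ^ 2 ≤ τ ^ 2 from hz])) 3).ne'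

theorem integral_inv_sqrt_one_add_sq_sub_sq_pow_three (τ : ℝ) :
    ∫ z in -τ..τ, (√(1 + (τ ^ 2 - z ^ 2)) ^ 3)⁻¹ = 2 * τ / jap τ ^ 2 := by
  have hle : ∀ z ∈ uIcc (-τ) τ, z ^ 2 ≤ τ ^ 2 := fun z hz => by
    rcases mem_uIcc.1 hz with h | h <;> nlinarith
  rw [intervalIntegral.integral_eq_sub_of_hasDerivAt
    (fun z hz => hasDerivAt_div_sqrt_one_add_sq_sub_sq (hle z hz))
    (continuousOn_inv_sqrt_one_add_sq_sub_sq_pow_three.mono hle).intervalIntegrable]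
  simp only [neg_sq, sub_self, add_zero, Real.sqrt_one, mul_one]
  ring

theorem jap_le_jap_mul_sqrt {τ z : ℝ} (hz : z ^ 2 ≤ τ ^ 2) :
    jap τ ≤ jap z * √(1 + (τ ^ 2 - z ^ 2)) := by
  rw [jap, jap, ← Real.sqrt_mul (by positivity)]
  exact Real.sqrt_le_sqrt (by nlinarith [mul_nonneg (sq_nonneg z) (sub_nonneg.2 hz)])

theorem inv_jap_sq_mul_inv_sqrt_pow_three_le {τ z : ℝ} (hz : z ^ 2 ≤ τ ^ 2) :
    (jap z ^ 2)⁻¹ * (√(1 + (τ ^ 2 - z ^ 2)) ^ 3)⁻¹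
      ≤ 2 * (jap τ ^ 2)⁻¹ * (√(1 + (τ ^ 2 - z ^ 2)) ^ 3)⁻¹ + 8 * (jap τ ^ 3)⁻¹ * (jap z ^ 2)⁻¹ := by
  have hpos : 0 < 1 + (τ ^ 2 - z ^ 2) := by linarith
  have := Real.sqrt_pos.2 hpos
  have hτ := jap_pos τ
  have hzpos := jap_pos z
  rcases le_total (jap τ ^ 2) (2 * jap z ^ 2) with h | h
  · have : (jap z ^ 2)⁻¹ ≤ 2 * (jap τ ^ 2)⁻¹ := by
      rw [← div_eq_mul_inv, inv_le_comm₀ (by positivity) (by positivity), inv_div]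
      linarith
    refine le_add_of_le_of_nonneg ?_ (by positivity)
    gcongr
  · have hle : jap τ ≤ 2 * √(1 + (τ ^ 2 - z ^ 2)) := by
      refine abs_le_of_sq_le_sq' ?_ (by positivity) |>.2
      rw [mul_pow, Real.sq_sqrt hpos.le]
      simp only [jap_sq] at h ⊢
      linarith
    have : (√(1 + (τ ^ 2 - z ^ 2)) ^ 3)⁻¹ ≤ 8 * (jap τ ^ 3)⁻¹ := by
      rw [← div_eq_mul_inv, inv_le_comm₀ (by positivity) (by positivity), inv_div]
      have := pow_le_pow_left₀ hτ.le hle 3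
      linarith
    refine le_add_of_nonneg_of_le (by positivity) ?_
    rw [mul_comm]
    gcongr

theorem jap_rpow_neg_half_sq (τ : ℝ) : (jap τ ^ (-(1 / 2) : ℝ)) ^ 2 = (jap τ)⁻¹ := by
  rw [← Real.rpow_mul_natCast (jap_pos τ).le]
  norm_num [Real.rpow_neg_one]

theorem jap_rpow_neg_three_halves_sq (τ : ℝ) :
    (jap τ ^ (-(3 / 2) : ℝ)) ^ 2 = (jap τ ^ 3)⁻¹ := by
  rw [← Real.rpow_mul_natCast (jap_pos τ).le, ← Real.rpow_natCast (jap τ) 3,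
    ← Real.rpow_neg (jap_pos τ).le]
  norm_num

theorem sq_le_sq_of_mem_Ioc {τ z : ℝ} (hz : z ∈ Ioc (-τ) τ) : z ^ 2 ≤ τ ^ 2 :=
  sq_le_sq' hz.1.le hz.2

theorem exists_eLpNorm_besselEntire_zero_le : ∃ C > 0, ∀ τ, 0 ≤ τ →
    eLpNorm (fun z => (jap z ^ 2)⁻¹ * besselEntire 0 (τ ^ 2 - z ^ 2)) 2
      (volume.restrict (Ioc (-τ) τ)) ≤ ENNReal.ofReal (C * jap τ ^ (-(1 / 2) : ℝ)) := by
  obtain ⟨C, hC, hbes⟩ := exists_sq_besselEntire_zero_le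
  have := Real.pi_pos
  refine ⟨√(C * Real.pi), by positivity, fun τ hτ => ?_⟩
  have hτ_pos := jap_pos τ
  refine eLpNorm_two_restrict_Ioc_le (g := fun z => C * (jap τ)⁻¹ * (jap z ^ 2)⁻¹)
    (neg_le_self hτ) (by positivity)
    ((continuous_const.mul continuous_inv_jap_sq).intervalIntegrable _ _) (fun z hz => ?_) ?_
  · have hzτ := sq_le_sq_of_mem_Ioc hz
    have := jap_pos z
    have := Real.sqrt_pos.2 (by linarith : 0 < 1 + (τ ^ 2 - z ^ 2))
    have hinv : (√(1 + (τ ^ 2 - z ^ 2)))⁻¹ ≤ (jap τ)⁻¹ * jap z := by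
      rw [inv_mul_eq_div, inv_le_comm₀ (by positivity) (by positivity), inv_div,
        div_le_iff₀' (by positivity)]
      exact jap_le_jap_mul_sqrt hzτ
    calc ((jap z ^ 2)⁻¹ * besselEntire 0 (τ ^ 2 - z ^ 2)) ^ 2
        ≤ (jap z ^ 2)⁻¹ ^ 2 * (C * ((jap τ)⁻¹ * jap z)) := by
          rw [mul_pow]
          gcongr
          refine (hbes _ (sub_nonneg.2 hzτ)).trans ?_
          rw [pow_one]
          gcongr
      _ = C * (jap τ)⁻¹ * ((jap z ^ 2)⁻¹ * (jap z)⁻¹) := by field_simp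
      _ ≤ C * (jap τ)⁻¹ * (jap z ^ 2)⁻¹ := by
          gcongr
          exact mul_le_of_le_one_right (by positivity) (inv_le_one_of_one_le₀ (one_le_jap z))
  · rw [mul_pow, Real.sq_sqrt (by positivity), jap_rpow_neg_half_sq,
      intervalIntegral.integral_const_mul, mul_right_comm C]
    gcongr
    exact intervalIntegral_inv_jap_sq_le_pi _ _

theorem intervalIntegrable_inv_sqrt_one_add_sq_sub_sq_pow_three {τ : ℝ} (hτ : 0 ≤ τ) :
    IntervalIntegrable (fun z => (√(1 + (τ ^ 2 - z ^ 2)) ^ 3)⁻¹) volume (-τ) τ := by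
  refine (continuousOn_inv_sqrt_one_add_sq_sub_sq_pow_three.mono fun z hz => ?_).intervalIntegrable
  rw [uIcc_of_le (neg_le_self hτ)] at hz
  exact sq_le_sq' hz.1 hz.2

theorem integral_inv_jap_sq_mul_inv_sqrt_pow_three_le {τ : ℝ} (hτ : 0 ≤ τ) :
    ∫ z in -τ..τ, (jap z ^ 2)⁻¹ * (√(1 + (τ ^ 2 - z ^ 2)) ^ 3)⁻¹
      ≤ (4 + 8 * Real.pi) * (jap τ ^ 3)⁻¹ := by
  have hτ_pos := jap_pos τ
  have hle : τ ≤ jap τ := (le_abs_self τ).trans (abs_le_jap τ)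
  have hsqrt := intervalIntegrable_inv_sqrt_one_add_sq_sub_sq_pow_three hτ
  have hjap := continuous_inv_jap_sq.intervalIntegrable (μ := volume) (-τ) τ
  calc ∫ z in -τ..τ, (jap z ^ 2)⁻¹ * (√(1 + (τ ^ 2 - z ^ 2)) ^ 3)⁻¹
      ≤ ∫ z in -τ..τ, (2 * (jap τ ^ 2)⁻¹ * (√(1 + (τ ^ 2 - z ^ 2)) ^ 3)⁻¹
          + 8 * (jap τ ^ 3)⁻¹ * (jap z ^ 2)⁻¹) :=
        intervalIntegral.integral_mono_on (neg_le_self hτ)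
          (hsqrt.continuousOn_mul continuous_inv_jap_sq.continuousOn)
          ((hsqrt.const_mul _).add (hjap.const_mul _)) fun z hz =>
            inv_jap_sq_mul_inv_sqrt_pow_three_le (sq_le_sq' hz.1 hz.2)
    _ = 2 * (jap τ ^ 2)⁻¹ * (2 * τ / jap τ ^ 2)
          + 8 * (jap τ ^ 3)⁻¹ * ∫ z in -τ..τ, (jap z ^ 2)⁻¹ := by
        rw [intervalIntegral.integral_add (hsqrt.const_mul _) (hjap.const_mul _),
          intervalIntegral.integral_const_mul, intervalIntegral.integral_const_mul,
          integral_inv_sqrt_one_add_sq_sub_sq_pow_three]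
    _ ≤ 2 * (jap τ ^ 2)⁻¹ * (2 * jap τ / jap τ ^ 2) + 8 * (jap τ ^ 3)⁻¹ * Real.pi := by
        gcongr
        exact intervalIntegral_inv_jap_sq_le_pi _ _
    _ = (4 + 8 * Real.pi) * (jap τ ^ 3)⁻¹ := by
        field_simp
        ring

theorem exists_eLpNorm_besselEntire_one_le : ∃ C > 0, ∀ τ, 0 ≤ τ →
    eLpNorm (fun z => (jap z ^ 2)⁻¹ * (z / 2 * besselEntire 1 (τ ^ 2 - z ^ 2))) 2
      (volume.restrict (Ioc (-τ) τ)) ≤ ENNReal.ofReal (C * jap τ ^ (-(3 / 2) : ℝ)) := by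
  obtain ⟨C, hC, hbes⟩ := exists_sq_besselEntire_one_le
  have := Real.pi_pos
  refine ⟨√(C * (4 + 8 * Real.pi)), by positivity, fun τ hτ => ?_⟩
  have hτ_pos := jap_pos τ
  refine eLpNorm_two_restrict_Ioc_le
    (g := fun z => C * ((jap z ^ 2)⁻¹ * (√(1 + (τ ^ 2 - z ^ 2)) ^ 3)⁻¹))
    (neg_le_self hτ) (by positivity)
    (((intervalIntegrable_inv_sqrt_one_add_sq_sub_sq_pow_three hτ).continuousOn_mul
      continuous_inv_jap_sq.continuousOn).const_mul C) (fun z hz => ?_) ?_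
  · have := jap_pos z
    have hz_le : (z / 2) ^ 2 ≤ jap z ^ 2 := by
      rw [jap_sq]
      nlinarith [sq_nonneg z]
    calc ((jap z ^ 2)⁻¹ * (z / 2 * besselEntire 1 (τ ^ 2 - z ^ 2))) ^ 2
        = (jap z ^ 2)⁻¹ ^ 2 * (z / 2) ^ 2 * besselEntire 1 (τ ^ 2 - z ^ 2) ^ 2 := by ring
      _ ≤ (jap z ^ 2)⁻¹ ^ 2 * jap z ^ 2 * (C * (√(1 + (τ ^ 2 - z ^ 2)) ^ 3)⁻¹) := by
          gcongr ?_ * ?_ * ?_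
          exact hbes _ (sub_nonneg.2 (sq_le_sq_of_mem_Ioc hz))
      _ = C * ((jap z ^ 2)⁻¹ * (√(1 + (τ ^ 2 - z ^ 2)) ^ 3)⁻¹) := by field_simp
  · rw [intervalIntegral.integral_const_mul, mul_pow, Real.sq_sqrt (by positivity),
      jap_rpow_neg_three_halves_sq, mul_assoc]
    gcongr
    exact integral_inv_jap_sq_mul_inv_sqrt_pow_three_le hτ

theorem eLpNorm_inv_jap_sq_mul_intervalIntegral_le {τ M A : ℝ} {S : Set ℝ} {k F : ℝ → ℝ}
    (hτ : 0 ≤ τ) (hS : MeasurableSet S) (hk : Measurable k) (hA : 0 ≤ A)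
    (hkA : eLpNorm (fun z => (jap z ^ 2)⁻¹ * k z) 2 (volume.restrict (Ioc (-τ) τ))
      ≤ ENNReal.ofReal A)
    (hF : ∀ x ∈ S, ∀ z ∈ Icc (-τ) τ, |F (x - z)| ≤ M * (jap (x - z) ^ 4)⁻¹) :
    eLpNorm (fun x => (jap x ^ 2)⁻¹ * ∫ z in -τ..τ, k z * F (x - z)) 2 (volume.restrict S)
      ≤ ENNReal.ofReal (2 * M * Real.pi * A) := by
  simp only [intervalIntegral.integral_of_le (neg_le_self hτ)]
  rw [ENNReal.ofReal_mul' hA]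
  refine (eLpNorm_inv_jap_sq_mul_setIntegral_le hS measurableSet_Ioc hk
    fun x hx z hz => hF x hx z (Ioc_subset_Icc_self hz)).trans ?_
  gcongr

theorem eLpNorm_two_inv_jap_sq_le :
    eLpNorm (fun x => (jap x ^ 2)⁻¹) 2 ≤ ENNReal.ofReal √Real.pi := by
  refine (ENNReal.pow_le_pow_left_iff two_ne_zero).1 ?_
  rw [eLpNorm_two_sq, ← ENNReal.ofReal_pow (Real.sqrt_nonneg _), Real.sq_sqrt Real.pi_pos.le,
    ← lintegral_inv_jap_sq]
  refine lintegral_mono fun x => pow_le_of_le_one (zero_le) ?_ two_ne_zero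
  rw [Real.enorm_of_nonneg (inv_nonneg.2 (sq_nonneg _)), ENNReal.ofReal_le_one]
  exact inv_le_one_of_one_le₀ (one_le_pow₀ (one_le_jap x))

theorem eLpNorm_inv_jap_sq_mul_comp_sub_le {M z : ℝ} {S : Set ℝ} {F : ℝ → ℝ}
    (hS : MeasurableSet S) (hF : ∀ x ∈ S, |F (x - z)| ≤ M * (jap (x - z) ^ 4)⁻¹) :
    eLpNorm (fun x => (jap x ^ 2)⁻¹ * F (x - z)) 2 (volume.restrict S)
      ≤ ENNReal.ofReal (2 * M * (jap z ^ 2)⁻¹ * √Real.pi) := by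
  have hw := continuous_inv_jap_sq
  calc eLpNorm (fun x => (jap x ^ 2)⁻¹ * F (x - z)) 2 (volume.restrict S)
      ≤ ENNReal.ofReal (2 * M * (jap z ^ 2)⁻¹)
          * eLpNorm (fun x => (jap (x - z) ^ 2)⁻¹) 2 (volume.restrict S) := by
        refine eLpNorm_le_mul_eLpNorm_of_ae_le_mul ?_ 2
        filter_upwards [ae_restrict_mem hS] with x hx
        rw [norm_mul, Real.norm_eq_abs (F _), Real.norm_of_nonneg (by positivity),
          Real.norm_of_nonneg (by positivity), mul_assoc (2 * M)]
        exact inv_jap_sq_mul_abs_le (hF x hx)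
    _ ≤ ENNReal.ofReal (2 * M * (jap z ^ 2)⁻¹) * ENNReal.ofReal √Real.pi := by
        gcongr
        refine (eLpNorm_mono_measure _ Measure.restrict_le_self).trans ?_
        exact (eLpNorm_comp_measurePreserving hw.aestronglyMeasurable
          (measurePreserving_sub_right volume z)).trans_le eLpNorm_two_inv_jap_sq_le
    _ = _ := (ENNReal.ofReal_mul' (Real.sqrt_nonneg _)).symm

theorem eLpNorm_inv_jap_sq_mul_comp_sub_le_rpow {M a z : ℝ} {S : Set ℝ} {F : ℝ → ℝ} (ha : -2 ≤ a)
    (hM : 0 ≤ M) (hS : MeasurableSet S) (hF : ∀ x ∈ S, |F (x - z)| ≤ M * (jap (x - z) ^ 4)⁻¹) :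
    eLpNorm (fun x => (jap x ^ 2)⁻¹ * F (x - z)) 2 (volume.restrict S)
      ≤ ENNReal.ofReal (2 * M * jap z ^ a * √Real.pi) := by
  refine (eLpNorm_inv_jap_sq_mul_comp_sub_le hS hF).trans (ENNReal.ofReal_le_ofReal ?_)
  gcongr
  rw [← jap_rpow_neg_two]
  exact Real.rpow_le_rpow_of_exponent_le (one_le_jap z) ha

theorem exists_eLpNorm_kgWave_le : ∃ C > 0, ∀ (τ M : ℝ) (S : Set ℝ) (F : ℝ → ℝ), 0 ≤ τ →
    MeasurableSet S → (∀ x ∈ S, ∀ z ∈ Icc (-τ) τ, |F (x - z)| ≤ M * (jap (x - z) ^ 4)⁻¹) →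
    eLpNorm (fun x => (jap x ^ 2)⁻¹ * kgWave τ F x) 2 (volume.restrict S)
      ≤ ENNReal.ofReal (C * M * jap τ ^ (-(1 / 2) : ℝ)) := by
  obtain ⟨C, hC, hkernel⟩ := exists_eLpNorm_besselEntire_zero_le
  refine ⟨2 * Real.pi * C, by have := Real.pi_pos; positivity, fun τ M S F hτ hS hF => ?_⟩
  have hbes := continuous_besselEntire 0
  have := jap_pos τ
  refine (eLpNorm_mono fun x => ?_).trans ((eLpNorm_inv_jap_sq_mul_intervalIntegral_le hτ hS
    (by fun_prop) (by positivity) (hkernel τ hτ) hF).trans_eq ?_)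
  · rw [kgWave, mul_left_comm, norm_mul]
    exact mul_le_of_le_one_left (norm_nonneg _) (by norm_num)
  · congr 1
    ring

theorem exists_eLpNorm_kgWaveDeriv_le : ∃ C > 0, ∀ (τ M : ℝ) (S : Set ℝ) (F : ℝ → ℝ), 0 ≤ τ →
    0 ≤ M → MeasurableSet S → Continuous F →
    (∀ x ∈ S, ∀ z ∈ Icc (-τ) τ, |F (x - z)| ≤ M * (jap (x - z) ^ 4)⁻¹) →
    eLpNorm (fun x => (jap x ^ 2)⁻¹ * kgWaveDeriv τ F x) 2 (volume.restrict S)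
      ≤ ENNReal.ofReal (C * M * jap τ ^ (-(3 / 2) : ℝ)) := by
  obtain ⟨C, hC, hkernel⟩ := exists_eLpNorm_besselEntire_one_le
  have := Real.pi_pos
  refine ⟨4 * √Real.pi + 2 * Real.pi * C, by positivity, fun τ M S F hτ hM hS hF_cont hF => ?_⟩
  have hbes := continuous_besselEntire 1
  have hτ_pos := jap_pos τ
  have hw := continuous_inv_jap_sq
  set J : ℝ → ℝ := fun x => ∫ z in -τ..τ, z / 2 * besselEntire 1 (τ ^ 2 - z ^ 2) * F (x - z)
  have hJ_cont : Continuous J := continuous_intervalIntegral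
    (G := fun x z => z / 2 * besselEntire 1 (τ ^ 2 - z ^ 2) * F (x - z))
    (by fun_prop) continuous_const continuous_const
  have hJ : eLpNorm (fun x => (jap x ^ 2)⁻¹ * J x) 2 (volume.restrict S)
      ≤ ENNReal.ofReal (2 * M * Real.pi * (C * jap τ ^ (-(3 / 2) : ℝ))) :=
    eLpNorm_inv_jap_sq_mul_intervalIntegral_le hτ hS (by fun_prop) (by positivity)
      (hkernel τ hτ) hF
  have hleft : eLpNorm (fun x => (jap x ^ 2)⁻¹ * F (x - -τ)) 2 (volume.restrict S)
      ≤ ENNReal.ofReal (2 * M * jap τ ^ (-(3 / 2) : ℝ) * √Real.pi) :=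
    (eLpNorm_inv_jap_sq_mul_comp_sub_le_rpow (a := -(3 / 2)) (by norm_num) hM hS
      fun x hx => hF x hx (-τ) (left_mem_Icc.2 (neg_le_self hτ))).trans_eq (by rw [jap_neg])
  have hright := eLpNorm_inv_jap_sq_mul_comp_sub_le_rpow (a := -(3 / 2)) (by norm_num) hM hS
    fun x hx => hF x hx τ (right_mem_Icc.2 (neg_le_self hτ))
  calc eLpNorm (fun x => (jap x ^ 2)⁻¹ * kgWaveDeriv τ F x) 2 (volume.restrict S)
      ≤ eLpNorm (fun x => (jap x ^ 2)⁻¹ * F (x - -τ) - (jap x ^ 2)⁻¹ * F (x - τ)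
          + (jap x ^ 2)⁻¹ * J x) 2 (volume.restrict S) := by
        refine eLpNorm_mono fun x => ?_
        rw [kgWaveDeriv, mul_left_comm, norm_mul, sub_neg_eq_add, ← mul_sub, ← mul_add]
        exact mul_le_of_le_one_left (norm_nonneg _) (by norm_num)
    _ ≤ _ := (eLpNorm_add_le (by fun_prop) (by fun_prop) one_le_two).trans
        (add_le_add ((eLpNorm_sub_le (by fun_prop) (by fun_prop) one_le_two).trans
          (add_le_add hleft hright)) hJ)
    _ = _ := by
        rw [← ENNReal.ofReal_add (by positivity) (by positivity),
          ← ENNReal.ofReal_add (by positivity) (by positivity)]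
        congr 1
        ring

/-! ### Duhamel integrals -/

theorem rpow_neg_mul_rpow_neg_le {a b s σ t : ℝ} (ha : 0 ≤ a) (hab : a ≤ b) (hs : 0 < s)
    (hσ : 0 < σ) (ht : 0 < t) (hle : t ≤ s + σ) :
    s ^ (-b) * σ ^ (-a) ≤ (t / 2) ^ (-a) * (s ^ (-b) + σ ^ (-b)) := by
  have hle_half {y : ℝ} (hy : t / 2 ≤ y) : y ^ (-a) ≤ (t / 2) ^ (-a) :=
    Real.rpow_le_rpow_of_nonpos (half_pos ht) hy (neg_nonpos.2 ha)
  rw [mul_add]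
  rcases le_total s σ with h | h
  · refine le_add_of_le_of_nonneg ?_ (by positivity)
    rw [mul_comm (s ^ (-b))]
    exact mul_le_mul_of_nonneg_right (hle_half (by linarith)) (by positivity)
  · refine le_add_of_nonneg_of_le (by positivity) ?_
    calc s ^ (-b) * σ ^ (-a) = s ^ (-a) * (s ^ (a - b) * σ ^ (-a)) := by
          rw [← mul_assoc, ← Real.rpow_add hs]
          ring_nf
      _ ≤ (t / 2) ^ (-a) * (σ ^ (a - b) * σ ^ (-a)) := by
          gcongr ?_ * (?_ * _)
          · exact hle_half (by linarith)
          · exact Real.rpow_le_rpow_of_nonpos hσ h (sub_nonpos.2 hab)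
      _ = (t / 2) ^ (-a) * σ ^ (-b) := by
          rw [← Real.rpow_add hσ]
          ring_nf

theorem intervalIntegrable_rpow_of_one_le (c : ℝ) {t : ℝ} (ht : 1 ≤ t) :
    IntervalIntegrable (fun s : ℝ => s ^ c) volume 1 t :=
  intervalIntegral.intervalIntegrable_rpow (Or.inr (notMem_uIcc_of_lt one_pos (by linarith)))

theorem intervalIntegrable_rpow_one_add_sub (c : ℝ) {t : ℝ} (ht : 1 ≤ t) :
    IntervalIntegrable (fun s => (1 + (t - s)) ^ c) volume 1 t := by
  simpa [add_sub_assoc] using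
    ((intervalIntegrable_rpow_of_one_le c ht).comp_sub_left (1 + t)).symm

theorem integral_rpow_neg_le {b t : ℝ} (hb : 1 < b) (ht : 1 ≤ t) :
    ∫ s in 1..t, s ^ (-b) ≤ (b - 1)⁻¹ := by
  rw [integral_rpow (Or.inr ⟨by linarith, notMem_uIcc_of_lt one_pos (by linarith)⟩),
    Real.one_rpow, ← neg_div_neg_eq, neg_sub, ← one_div, show -(-b + 1) = b - 1 by ring]
  have := Real.rpow_nonneg (by linarith : 0 ≤ t) (-b + 1)
  gcongr
  linarith

theorem intervalIntegrable_rpow_mul_rpow_one_add_sub (b a : ℝ) {t : ℝ} (ht : 1 ≤ t) :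
    IntervalIntegrable (fun s => s ^ b * (1 + (t - s)) ^ a) volume 1 t := by
  refine (intervalIntegrable_rpow_of_one_le b ht).mul_continuousOn
    (ContinuousOn.rpow_const (by fun_prop) fun s hs => Or.inl ?_)
  rw [uIcc_of_le ht] at hs
  linarith [hs.2]

theorem integral_rpow_neg_mul_rpow_neg_le {a b t : ℝ} (ha : 0 ≤ a) (hab : a ≤ b) (hb : 1 < b)
    (ht : 1 ≤ t) :
    ∫ s in 1..t, s ^ (-b) * (1 + (t - s)) ^ (-a) ≤ 2 ^ (a + 1) / (b - 1) * t ^ (-a) := by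
  have hint := intervalIntegrable_rpow_of_one_le (-b) ht
  have hint' := intervalIntegrable_rpow_one_add_sub (-b) ht
  have hflip : ∫ s in 1..t, (1 + (t - s)) ^ (-b) = ∫ s in 1..t, s ^ (-b) := by
    simpa [add_sub_assoc] using
      intervalIntegral.integral_comp_sub_left (a := 1) (b := t) (fun s : ℝ => s ^ (-b)) (1 + t)
  calc ∫ s in 1..t, s ^ (-b) * (1 + (t - s)) ^ (-a)
      ≤ ∫ s in 1..t, (t / 2) ^ (-a) * (s ^ (-b) + (1 + (t - s)) ^ (-b)) :=
        intervalIntegral.integral_mono_on ht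
          (intervalIntegrable_rpow_mul_rpow_one_add_sub _ _ ht) ((hint.add hint').const_mul _)
          fun s hs => rpow_neg_mul_rpow_neg_le ha hab (by linarith [hs.1]) (by linarith [hs.2])
            (by linarith) (by linarith)
    _ = (t / 2) ^ (-a) * (2 * ∫ s in 1..t, s ^ (-b)) := by
        rw [intervalIntegral.integral_const_mul, intervalIntegral.integral_add hint hint', hflip,
          two_mul]
    _ ≤ (t / 2) ^ (-a) * (2 * (b - 1)⁻¹) := by
        gcongr
        exact integral_rpow_neg_le hb ht
    _ = 2 ^ (a + 1) / (b - 1) * t ^ (-a) := by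
        rw [Real.div_rpow (by linarith) two_pos.le, Real.rpow_neg two_pos.le,
          Real.rpow_add_one two_ne_zero]
        field_simp

theorem jap_rpow_neg_le {a τ : ℝ} (ha : 0 ≤ a) (hτ : 0 ≤ τ) :
    jap τ ^ (-a) ≤ 2 ^ a * (1 + τ) ^ (-a) := by
  have hle : (1 + τ) / 2 ≤ jap τ := Real.le_sqrt_of_sq_le (by nlinarith [sq_nonneg (1 - τ)])
  refine (Real.rpow_le_rpow_of_nonpos (by positivity) hle (neg_nonpos.2 ha)).trans_eq ?_
  rw [Real.div_rpow (by positivity) two_pos.le, Real.rpow_neg two_pos.le, div_inv_eq_mul, mul_comm]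

theorem eLpNorm_two_intervalIntegral_le {X : Type*} [MeasurableSpace X] {ν : Measure X} [SFinite ν]
    {a b : ℝ} (hab : a ≤ b) {v : ℝ → X → ℝ} (hv : Measurable v.uncurry) :
    eLpNorm (fun x => ∫ s in a..b, v s x) 2 ν ≤ ∫⁻ s in Ioc a b, eLpNorm (v s) 2 ν := by
  simp only [intervalIntegral.integral_of_le hab]
  calc eLpNorm (fun x => ∫ s in Ioc a b, v s x) 2 ν
      ≤ eLpNorm (fun x => ∫⁻ s in Ioc a b, ‖v s x‖ₑ) 2 ν :=
        eLpNorm_mono_enorm fun x => enorm_integral_le_lintegral_enorm _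
    _ ≤ ∫⁻ s in Ioc a b, eLpNorm (fun x => ‖v s x‖ₑ) 2 ν := eLpNorm_two_lintegral_le hv.enorm
    _ = ∫⁻ s in Ioc a b, eLpNorm (v s) 2 ν := by simp only [eLpNorm_enorm]

theorem eLpNorm_two_duhamel_le {X : Type*} [MeasurableSpace X] {ν : Measure X} [SFinite ν]
    {a b t A : ℝ} (ha : 0 ≤ a) (hab : a ≤ b) (hb : 1 < b) (ht : 1 ≤ t) (hA : 0 ≤ A)
    {v : ℝ → X → ℝ} (hv : Measurable v.uncurry) (hdecay : ∀ s ∈ Icc 1 t,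
      eLpNorm (v s) 2 ν ≤ ENNReal.ofReal (A * s ^ (-b) * jap (t - s) ^ (-a))) :
    eLpNorm (fun x => ∫ s in 1..t, v s x) 2 ν
      ≤ ENNReal.ofReal (2 ^ a * (2 ^ (a + 1) / (b - 1)) * A * t ^ (-a)) := by
  have hbound : ∀ s ∈ Ioc 1 t, A * s ^ (-b) * jap (t - s) ^ (-a)
      ≤ 2 ^ a * A * (s ^ (-b) * (1 + (t - s)) ^ (-a)) := fun s hs => by
    have := Real.rpow_nonneg (by linarith [hs.1] : 0 ≤ s) (-b)
    refine (mul_le_mul_of_nonneg_left (jap_rpow_neg_le ha (sub_nonneg.2 hs.2))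
      (by positivity)).trans_eq ?_
    ring
  have hint : IntegrableOn (fun s => 2 ^ a * A * (s ^ (-b) * (1 + (t - s)) ^ (-a))) (Ioc 1 t) :=
    ((intervalIntegrable_rpow_mul_rpow_one_add_sub _ _ ht).const_mul _).1
  calc eLpNorm (fun x => ∫ s in 1..t, v s x) 2 ν
      ≤ ∫⁻ s in Ioc 1 t, eLpNorm (v s) 2 ν := eLpNorm_two_intervalIntegral_le ht hv
    _ ≤ ∫⁻ s in Ioc 1 t, ENNReal.ofReal (2 ^ a * A * (s ^ (-b) * (1 + (t - s)) ^ (-a))) :=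
        setLIntegral_mono' measurableSet_Ioc fun s hs => (hdecay s (Ioc_subset_Icc_self hs)).trans
          (ENNReal.ofReal_le_ofReal (hbound s hs))
    _ = ENNReal.ofReal (2 ^ a * A * ∫ s in 1..t, s ^ (-b) * (1 + (t - s)) ^ (-a)) := by
        rw [← ofReal_integral_eq_lintegral_ofReal hint, integral_const_mul,
          intervalIntegral.integral_of_le ht]
        filter_upwards [ae_restrict_mem measurableSet_Ioc] with s hs
        have := Real.rpow_nonneg (by linarith [hs.1] : 0 ≤ s) (-b)
        have := Real.rpow_nonneg (by linarith [hs.2] : 0 ≤ 1 + (t - s)) (-a)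
        positivity
    _ ≤ ENNReal.ofReal (2 ^ a * A * (2 ^ (a + 1) / (b - 1) * t ^ (-a))) := by
        gcongr
        exact integral_rpow_neg_mul_rpow_neg_le ha hab hb ht
    _ = ENNReal.ofReal (2 ^ a * (2 ^ (a + 1) / (b - 1)) * A * t ^ (-a)) := by ring_nf

theorem sq_sub_sq_le_of_domain_of_dependence {r s t x z : ℝ} (hx : t ^ 2 - x ^ 2 ≤ r) (hr : 0 ≤ r)
    (hs : 0 ≤ s) (hz : z ∈ Icc (-(t - s)) (t - s)) : s ^ 2 - (x - z) ^ 2 ≤ r := by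
  rcases le_or_gt s |x - z| with h | h
  · nlinarith [sq_abs (x - z)]
  · obtain ⟨hlt, hgt⟩ := abs_lt.1 h
    nlinarith [mul_nonneg (sub_nonneg.2 hz.2) (by linarith : 0 ≤ s + (x - z)),
      mul_nonneg (by linarith [hz.1] : 0 ≤ t - s + z) (by linarith : 0 ≤ s - (x - z)),
      mul_nonneg (by linarith [hz.1] : 0 ≤ t - s + z) (sub_nonneg.2 hz.2)]

theorem wL2_duhamel_le {a b t R A C : ℝ} (ha : 0 ≤ a) (hab : a ≤ b) (hb : 1 < b) (ht : 1 ≤ t)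
    (hA : 0 ≤ A) (hC : 0 ≤ C) {h : ℝ → ℝ → ℝ} (hh : Continuous h.uncurry)
    (hdecay : ∀ s ∈ Icc 1 t, ∀ y, s ^ 2 - y ^ 2 ≤ R ^ 2 →
      |h s y| ≤ A * s ^ (-b) * (jap y ^ 4)⁻¹)
    {T : ℝ → (ℝ → ℝ) → ℝ → ℝ} (hT : Continuous fun p : ℝ × ℝ => T (t - p.1) (h p.1) p.2)
    (hT_le : ∀ (τ M : ℝ) (S : Set ℝ) (F : ℝ → ℝ), 0 ≤ τ → 0 ≤ M → MeasurableSet S →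
      Continuous F → (∀ x ∈ S, ∀ z ∈ Icc (-τ) τ, |F (x - z)| ≤ M * (jap (x - z) ^ 4)⁻¹) →
      eLpNorm (fun x => (jap x ^ 2)⁻¹ * T τ F x) 2 (volume.restrict S)
        ≤ ENNReal.ofReal (C * M * jap τ ^ (-a))) :
    wL2 t R (fun x => ∫ s in 1..t, T (t - s) (h s) x)
      ≤ 2 ^ a * (2 ^ (a + 1) / (b - 1)) * C * A * t ^ (-a) := by
  have : 0 < b - 1 := sub_pos.2 hb
  refine wL2_le_of_eLpNorm_le (by positivity) ?_
  simp only [← intervalIntegral.integral_const_mul]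
  refine (eLpNorm_two_duhamel_le ha hab hb ht (mul_nonneg hC hA)
    (v := fun s x => (jap x ^ 2)⁻¹ * T (t - s) (h s) x)
    ((continuous_inv_jap_sq.comp continuous_snd).mul hT).measurable fun s hs => ?_).trans_eq
    (by ring_nf)
  have hs_nonneg : 0 ≤ s := by linarith [hs.1]
  refine (hT_le (t - s) (A * s ^ (-b)) _ (h s) (sub_nonneg.2 hs.2) (by positivity)
    (measurableSet_le (by fun_prop) (by fun_prop)) (hh.uncurry_left s) fun x hx z hz =>
      hdecay s hs _ (sq_sub_sq_le_of_domain_of_dependence hx (sq_nonneg R) hs_nonneg hz)).trans_eq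
        (by ring_nf)

theorem exists_wL2_duhamel_kgWave_le {b : ℝ} (hb : 1 < b) : ∃ C > 0,
    ∀ (h : ℝ → ℝ → ℝ) (R A t : ℝ), 0 ≤ A → 1 ≤ t → Continuous h.uncurry →
    (∀ s ∈ Icc 1 t, ∀ y, s ^ 2 - y ^ 2 ≤ R ^ 2 → |h s y| ≤ A * s ^ (-b) * (jap y ^ 4)⁻¹) →
    wL2 t R (fun x => ∫ s in 1..t, kgWave (t - s) (h s) x) ≤ C * A * t ^ (-(1 / 2) : ℝ) := by
  obtain ⟨C, hC, hwave⟩ := exists_eLpNorm_kgWave_le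
  have := sub_pos.2 hb
  exact ⟨2 ^ (1 / 2 : ℝ) * (2 ^ (1 / 2 + 1 : ℝ) / (b - 1)) * C, by positivity,
    fun h R A t hA ht hh hdecay => wL2_duhamel_le (by norm_num) (by linarith) hb ht hA hC.le hh
      hdecay (continuous_kgWave (by fun_prop) (by fun_prop) (by fun_prop))
      fun τ M S F hτ _ hS _ hF => hwave τ M S F hτ hS hF⟩

theorem exists_wL2_duhamel_kgWaveDeriv_le {b : ℝ} (hb : 3 / 2 ≤ b) : ∃ C > 0,
    ∀ (h : ℝ → ℝ → ℝ) (R A t : ℝ), 0 ≤ A → 1 ≤ t → Continuous h.uncurry →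
    (∀ s ∈ Icc 1 t, ∀ y, s ^ 2 - y ^ 2 ≤ R ^ 2 → |h s y| ≤ A * s ^ (-b) * (jap y ^ 4)⁻¹) →
    wL2 t R (fun x => ∫ s in 1..t, kgWaveDeriv (t - s) (h s) x) ≤ C * A * t ^ (-(3 / 2) : ℝ) := by
  obtain ⟨C, hC, hwave⟩ := exists_eLpNorm_kgWaveDeriv_le
  have : 0 < b - 1 := by linarith
  exact ⟨2 ^ (3 / 2 : ℝ) * (2 ^ (3 / 2 + 1 : ℝ) / (b - 1)) * C, by positivity,
    fun h R A t hA ht hh hdecay => wL2_duhamel_le (by norm_num) hb (by linarith) ht hA hC.le hh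
      hdecay (continuous_kgWaveDeriv (by fun_prop) (by fun_prop) (by fun_prop)) hwave⟩

theorem integrable_of_isBigO_inv_jap_sq {f : ℝ → ℝ} (hf : Continuous f)
    (hdecay : f =O[cocompact ℝ] fun x => (jap x ^ 2)⁻¹) : Integrable f :=
  hf.locallyIntegrable.integrable_of_isBigO_cocompact hdecay
    (integrable_inv_jap_sq.integrableAtFilter _)

theorem memLp_two_of_isBigO_inv_jap_sq {f : ℝ → ℝ} (hf : Continuous f)
    (hdecay : f =O[cocompact ℝ] fun x => (jap x ^ 2)⁻¹) : MemLp f 2 := by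
  refine (memLp_two_iff_integrable_sq hf.aestronglyMeasurable).2
    (integrable_of_isBigO_inv_jap_sq (hf.pow 2) ((hdecay.pow 2).trans ?_))
  refine .of_norm_le fun x => ?_
  have : (jap x ^ 2)⁻¹ ≤ 1 := inv_le_one_of_one_le₀ (one_le_pow₀ (one_le_jap x))
  rw [norm_pow, Real.norm_of_nonneg (by positivity)]
  exact pow_le_of_le_one (by positivity) this two_ne_zero

section Source

variable {h : ℝ → ℝ → ℝ}

theorem u1_eq_integral_kgWave {β : ℝ → ℝ} {u : ℝ → ℝ → ℝ} {t : ℝ} (ht : 1 ≤ t)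
    (hh : Continuous h.uncurry) (hsource : ∀ s ∈ Icc 1 t, (fun y => β y * u s y ^ 3) = h s)
    (hdecay : ∀ s ∈ Icc 1 t, h s =O[cocompact ℝ] fun y => (jap y ^ 2)⁻¹) :
    u1 β u t = fun x => ∫ s in 1..t, kgWave (t - s) (h s) x := by
  funext x
  refine intervalIntegral.integral_congr fun s hs => ?_
  rw [uIcc_of_le ht] at hs
  have hhs := hh.uncurry_left s
  simp only [hsource s hs]
  exact KGprop_eq_kgWave (sub_nonneg.2 hs.2) hhs
    (integrable_of_isBigO_inv_jap_sq hhs (hdecay s hs))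
    (memLp_two_of_isBigO_inv_jap_sq hhs (hdecay s hs)) x

theorem hasDerivAt_integral_kgWave (hh : Continuous h.uncurry) (t x : ℝ) :
    HasDerivAt (fun x => ∫ s in 1..t, kgWave (t - s) (h s) x)
      (∫ s in 1..t, kgWaveDeriv (t - s) (h s) x) x := by
  have hh' : Continuous (fun p : ℝ × ℝ => h p.2).uncurry :=
    hh.comp (f := fun p : (ℝ × ℝ) × ℝ => (p.1.2, p.2)) (by fun_prop)
  exact hasDerivAt_intervalIntegral_param (F := fun x s => kgWave (t - s) (h s) x)
    (F' := fun x s => kgWaveDeriv (t - s) (h s) x)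
    (continuous_kgWave (F := fun p : ℝ × ℝ => h p.2) (by fun_prop) hh' continuous_fst)
    (continuous_kgWaveDeriv (F := fun p : ℝ × ℝ => h p.2) (by fun_prop) hh' continuous_fst)
    (fun x s => hasDerivAt_kgWave (hh.uncurry_left s) (t - s) x) 1 t x

end Source

theorem isBigO_cocompact_inv_jap_sq {f : ℝ → ℝ} {s R M : ℝ}
    (hf : ∀ y, s ^ 2 - y ^ 2 ≤ R ^ 2 → |f y| ≤ M * (jap y ^ 4)⁻¹) :
    f =O[cocompact ℝ] fun y => (jap y ^ 2)⁻¹ := by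
  refine .of_bound |M| ?_
  filter_upwards [(tendsto_norm_cocompact_atTop (E := ℝ)).eventually_ge_atTop |s|] with y hy
  have hjap := one_le_jap y
  have hfy := hf y (by nlinarith [sq_le_sq.2 hy, sq_nonneg R])
  rw [Real.norm_eq_abs, norm_inv, norm_pow, Real.norm_of_nonneg (jap_pos y).le]
  refine hfy.trans ?_
  gcongr
  · exact le_abs_self M
  · norm_num

theorem continuous_cubic_source {β : ℝ → ℝ} {u : ℝ → ℝ → ℝ} (hβ : Continuous β)
    (hu : ContinuousOn (fun p : ℝ × ℝ => u p.1 p.2) {p | 1 ≤ p.1}) :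
    Continuous (fun s y => β y * u (max s 1) y ^ 3).uncurry := by
  have hmax : Continuous fun p : ℝ × ℝ => u (max p.1 1) p.2 :=
    hu.comp_continuous (f := fun p : ℝ × ℝ => (max p.1 1, p.2)) (by fun_prop)
      fun p => le_max_right p.1 1
  exact (hβ.comp continuous_snd).mul (hmax.pow 3)

theorem abs_cubic_source_le {b v s B D δ : ℝ} (hs : 0 < s) (hb : |b| ≤ B * D)
    (hv : √s * |v| ≤ δ) : |b * v ^ 3| ≤ B * δ ^ 3 * s ^ (-(3 / 2) : ℝ) * D := by
  have hsqrt : s ^ (-(3 / 2) : ℝ) = (√s ^ 3)⁻¹ := by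
    rw [Real.sqrt_eq_rpow, ← Real.rpow_mul_natCast hs.le, ← Real.rpow_neg hs.le]
    norm_num
  have hpos := Real.sqrt_pos.2 hs
  have hv' : |v| ≤ δ / √s := (le_div_iff₀' hpos).2 hv
  calc |b * v ^ 3| = |b| * |v| ^ 3 := by rw [abs_mul, abs_pow]
    _ ≤ B * D * (δ / √s) ^ 3 := by
        gcongr
        exact (abs_nonneg b).trans hb
    _ = B * δ ^ 3 * s ^ (-(3 / 2) : ℝ) * D := by rw [hsqrt]; ring

theorem jap_le_one_add_abs (x : ℝ) : jap x ≤ 1 + |x| :=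
  Real.sqrt_le_sqrt (by nlinarith [sq_abs x, abs_nonneg x] : 1 + x ^ 2 ≤ (1 + |x|) ^ 2)
    |>.trans_eq (Real.sqrt_sq (by positivity))

theorem isBigO_top_inv_jap_pow (β : SchwartzMap ℝ ℝ) (k : ℕ) :
    β =O[⊤] fun y => (jap y ^ k)⁻¹ := by
  have hsup := β.one_add_le_sup_seminorm_apply (𝕜 := ℝ) (m := (k, 0)) le_rfl le_rfl
  simp only [norm_iteratedFDeriv_zero, Real.norm_eq_abs] at hsup
  obtain ⟨C, hC⟩ : ∃ C, ∀ y, (1 + |y|) ^ k * |β y| ≤ C := ⟨_, hsup⟩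
  refine .of_bound C (eventually_top.2 fun y => ?_)
  have hjap := jap_pos y
  rw [norm_inv, norm_pow, Real.norm_of_nonneg hjap.le, ← div_eq_mul_inv,
    le_div_iff₀' (by positivity), Real.norm_eq_abs]
  refine le_trans ?_ (hC y)
  gcongr
  exact jap_le_one_add_abs y

theorem weighted_energy_estimates_u1_general {β : ℝ → ℝ} (hβ : Continuous β)
    (hβ_decay : β =O[⊤] fun y => (jap y ^ 4)⁻¹) :
    ∃ C > (0 : ℝ), ∀ (R δ : ℝ) (u : ℝ → ℝ → ℝ),
      ContinuousOn (fun p : ℝ × ℝ => u p.1 p.2) {p : ℝ × ℝ | 1 ≤ p.1} →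
      (∀ t x : ℝ, 1 ≤ t → t ^ 2 - x ^ 2 ≤ R ^ 2 → √t * |u t x| ≤ δ) →
      ∀ t : ℝ, 1 ≤ t →
        wL2 t R (fun x => u1 β u t x) ≤ C * δ ^ 3 * t ^ (-(1 : ℝ) / 2) ∧
        wL2 t R (fun x => px (u1 β u) t x) ≤ C * δ ^ 3 * t ^ (-(3 : ℝ) / 2) := by
  obtain ⟨B, hB, hβB⟩ := hβ_decay.exists_pos
  obtain ⟨C₁, hC₁, hwave⟩ := exists_wL2_duhamel_kgWave_le (b := 3 / 2) (by norm_num)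
  obtain ⟨C₂, -, hderiv⟩ := exists_wL2_duhamel_kgWaveDeriv_le (b := 3 / 2) le_rfl
  refine ⟨max C₁ C₂ * B, by positivity, fun R δ u hu hdecay t ht => ?_⟩
  have hδ : 0 ≤ δ := (by positivity : 0 ≤ √1 * |u 1 1|).trans
    (hdecay 1 1 le_rfl (by linarith [sq_nonneg R]))
  set h : ℝ → ℝ → ℝ := fun s y => β y * u (max s 1) y ^ 3 with h_def
  have hh : Continuous h.uncurry := continuous_cubic_source hβ hu
  have hh_decay (s : ℝ) (hs : s ∈ Icc 1 t) (y : ℝ) (hy : s ^ 2 - y ^ 2 ≤ R ^ 2) :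
      |h s y| ≤ B * δ ^ 3 * s ^ (-(3 / 2) : ℝ) * (jap y ^ 4)⁻¹ := by
    have hβy := eventually_top.1 hβB.bound y
    rw [Real.norm_eq_abs, Real.norm_of_nonneg (by have := jap_pos y; positivity)] at hβy
    simp only [h_def, max_eq_left hs.1]
    exact abs_cubic_source_le (one_pos.trans_le hs.1) hβy (hdecay s y hs.1 hy)
  have hu1 : u1 β u t = fun x => ∫ s in 1..t, kgWave (t - s) (h s) x :=
    u1_eq_integral_kgWave ht hh (fun s hs => by simp only [h_def, max_eq_left hs.1])
      fun s hs => isBigO_cocompact_inv_jap_sq (hh_decay s hs)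
  have hpx : px (u1 β u) t = fun x => ∫ s in 1..t, kgWaveDeriv (t - s) (h s) x :=
    funext fun x => by
      rw [px, hu1]
      exact (hasDerivAt_integral_kgWave hh t x).deriv
  rw [neg_div, neg_div, hpx, hu1, mul_assoc _ B]
  exact ⟨(hwave h R _ t (by positivity) ht hh hh_decay).trans (by gcongr; exact le_max_left C₁ C₂),
    (hderiv h R _ t (by positivity) ht hh hh_decay).trans (by gcongr; exact le_max_right C₁ C₂)⟩

/-- Weighted energy estimates for the Duhamel component `u₁`:
`‖⟨·⟩^{-2} χ_{S_t^R} u₁(t)‖_{L²} ≲ (2C₀ε)³ t^{-1/2}` and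
`‖⟨·⟩^{-2} χ_{S_t^R} ∂_x u₁(t)‖_{L²} ≲ (2C₀ε)³ t^{-3/2}`. -/
theorem weighted_energy_estimates_u1 (β₀ : ℝ) (β : SchwartzMap ℝ ℝ) (N : ℕ) (hN : 2 ≤ N) :
    ∃ C > (0 : ℝ),
      ∀ C₀ : ℝ, 1 ≤ C₀ → ∃ ε₀ > (0 : ℝ), ∀ R : ℝ, 1 ≤ R →
      ∀ (f g : ℝ → ℝ) (u : ℝ → ℝ → ℝ),
        ContDiff ℝ (⊤ : ℕ∞) f → ContDiff ℝ (⊤ : ℕ∞) g →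
        ContDiffOn ℝ (⊤ : ℕ∞) (fun p : ℝ × ℝ => u p.1 p.2) {p : ℝ × ℝ | 1 ≤ p.1} →
        (∀ t x : ℝ, 1 ≤ t →
          pt (pt u) t x - px (px u) t x + u t x
            = β₀ * (u t x) ^ 3 + β x * (u t x) ^ 3) →
        (∀ x : ℝ, u 1 x = f x) →
        (∀ x : ℝ, pt u 1 x = g x) →
        epsN N f g ≤ ε₀ →
        (∀ t x : ℝ, 1 ≤ t → t ^ 2 - x ^ 2 ≤ R ^ 2 →
          Real.sqrt t * |u t x| ≤ 2 * C₀ * epsN N f g) →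
        ∀ t : ℝ, 1 ≤ t →
          wL2 t R (fun x => u1 (fun z => β z) u t x)
              ≤ C * (2 * C₀ * epsN N f g) ^ 3 * t ^ (-(1 : ℝ) / 2) ∧
          wL2 t R (fun x => px (u1 (fun z => β z) u) t x)
              ≤ C * (2 * C₀ * epsN N f g) ^ 3 * t ^ (-(3 : ℝ) / 2) := by
  obtain ⟨C, hC, hestimate⟩ :=
    weighted_energy_estimates_u1_general β.continuous (isBigO_top_inv_jap_pow β 4)
  exact ⟨C, hC, fun C₀ _ => ⟨1, one_pos, fun R _ f g u _ _ hu _ _ _ _ hdecay =>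
    hestimate R (2 * C₀ * epsN N f g) u hu.continuousOn hdecay⟩⟩
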